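/- arXiv:1601.07109 — 7 statements merged into one kernel-verified Lean document; each statement's English description precedes it below -/
import Mathlib

section
/- Let k ≥ 4. The restriction map res, sending a function c on the set of pairwise distinct k-tuples of points of S¹ to the function res(c)(λ₁, ..., λ_{k−3}) = c(−i, 1, −1, 𝒞(λ₁), ..., 𝒞(λ_{k−3})) on P_{k−3} = {(λ₁,...,λ_{k−3}) : 0 < λ₁ < ⋯ < λ_{k−3} < 1}, is a bijection from the set of real-valued G-invariant alternating functions on pairwise distinct k-tuples of points of S¹ onto the set of functions f : P_{k−3} → ℝ satisfying f(λ₁, ..., λ_{k−3}) = (−1)^{k+1}·f(1−λ_{k−3}, (1−λ_{k−3})/(1−λ₁), ..., (1−λ_{k−3})/(1−λ_{k−4})). -/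
open Complex

/-- The cross ratio `[z₁:z₂:z₃:z₄] = (z₁-z₃)(z₂-z₄)/((z₂-z₃)(z₁-z₄))`. -/
noncomputable def crossRatio (z₁ z₂ z₃ z₄ : ℂ) : ℂ :=
  ((z₁ - z₃) * (z₂ - z₄)) / ((z₂ - z₃) * (z₁ - z₄))

/-- A tuple `(z₁, …, z_k)` of points of `S¹` is *cyclically oriented* if it can be written as
`z_j = e^{iθ_j}` with `θ₁ < θ₂ < ⋯ < θ_k < θ₁ + 2π`. -/
def CyclicallyOriented {k : ℕ} (z : Fin k → ℂ) : Prop :=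
  ∃ θ : Fin k → ℝ, StrictMono θ ∧ (∀ i j : Fin k, θ j < θ i + 2 * Real.pi) ∧
    ∀ j, z j = Complex.exp (θ j * Complex.I)

/-- The Cayley transform `𝒞(z) = (z-i)/(z+i)`. -/
noncomputable def cayley (z : ℂ) : ℂ := (z - Complex.I) / (z + Complex.I)

/-- The tuple `(-i, 1, -1, 𝒞(λ₁), …, 𝒞(λ_{k-3}))` (0-indexed). -/
noncomputable def stdTuple (k : ℕ) (lam : Fin (k - 3) → ℝ) : Fin k → ℂ := fun j =>
  if h0 : (j : ℕ) = 0 then -Complex.I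
  else if h1 : (j : ℕ) = 1 then 1
  else if h2 : (j : ℕ) = 2 then -1
  else cayley ((lam ⟨(j : ℕ) - 3, by have := j.isLt; omega⟩ : ℝ) : ℂ)

/-- The Möbius transformation `z ↦ (az+b)/(b̄z+ā)` given by an element of `PU(1,1)`. -/
noncomputable def mobius (a b z : ℂ) : ℂ :=
  (a * z + b) / ((starRingEnd ℂ) b * z + (starRingEnd ℂ) a)

/-- A tuple of pairwise distinct points of the unit circle `S¹`. -/
def OnCircleInj {k : ℕ} (z : Fin k → ℂ) : Prop :=
  (∀ j, ‖z j‖ = 1) ∧ Function.Injective z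

/-- `c` is alternating on pairwise distinct tuples of points of `S¹`. -/
def IsAlternating {k : ℕ} (c : (Fin k → ℂ) → ℝ) : Prop :=
  ∀ (σ : Equiv.Perm (Fin k)) (z : Fin k → ℂ), OnCircleInj z →
    c (fun i => z (σ i)) = (Equiv.Perm.sign σ : ℤ) * c z

/-- `c` is invariant under the diagonal action of `G = PU(1,1)` on tuples of points of `S¹`. -/
def IsGInvariant {k : ℕ} (c : (Fin k → ℂ) → ℝ) : Prop :=
  ∀ a b : ℂ, ‖a‖ ^ 2 - ‖b‖ ^ 2 = 1 →
    ∀ z : Fin k → ℂ, OnCircleInj z → c (fun i => mobius a b (z i)) = c z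

/-- `0 < λ₁ < ⋯ < λ_n < 1`, i.e. membership in the parameter space `P_n`. -/
def InParam {n : ℕ} (lam : Fin n → ℝ) : Prop :=
  (∀ j, 0 < lam j) ∧ StrictMono lam ∧ (∀ j, lam j < 1)

/-- The transformation `(λ₁, …, λ_{k-3}) ↦ (1-λ_{k-3}, (1-λ_{k-3})/(1-λ₁), …,
(1-λ_{k-3})/(1-λ_{k-4}))` of the parameter space (0-indexed). -/
noncomputable def shiftP (k : ℕ) (lam : Fin (k - 3) → ℝ) : Fin (k - 3) → ℝ := fun j =>
  if (j : ℕ) = 0 then 1 - lam ⟨k - 3 - 1, by have := j.isLt; omega⟩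
  else (1 - lam ⟨k - 3 - 1, by have := j.isLt; omega⟩) /
    (1 - lam ⟨(j : ℕ) - 1, by have := j.isLt; omega⟩)

noncomputable def hcs (z : ℂ) : ℝ := Real.cos (Complex.arg z / 2)
noncomputable def hsn (z : ℂ) : ℝ := Real.sin (Complex.arg z / 2)
noncomputable def DD (z w : ℂ) : ℝ := hsn w * hcs z - hcs w * hsn z

/-- cyclic positivity -/
def CycP {k : ℕ} (z : Fin k → ℂ) : Prop :=
  ∀ i j l : Fin k, i < j → j < l →
    0 < DD (z i) (z j) * DD (z j) (z l) * DD (z i) (z l)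

noncomputable def Lam (k : ℕ) (hk : 4 ≤ k) (z : Fin k → ℂ) : Fin (k - 3) → ℝ := fun j =>
  (DD (z ⟨(j : ℕ) + 3, by have := j.isLt; omega⟩) (z ⟨2, by omega⟩) *
      DD (z ⟨0, by omega⟩) (z ⟨1, by omega⟩)) /
  (DD (z ⟨(j : ℕ) + 3, by have := j.isLt; omega⟩) (z ⟨1, by omega⟩) *
      DD (z ⟨0, by omega⟩) (z ⟨2, by omega⟩))

lemma DD_anti (z w : ℂ) : DD w z = - DD z w := by unfold DD; ring
lemma DD_self (z : ℂ) : DD z z = 0 := by unfold DD; ring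

lemma DD_eq_sin (z w : ℂ) : DD z w = Real.sin ((Complex.arg w - Complex.arg z) / 2) := by
  unfold DD hsn hcs
  rw [sub_div, Real.sin_sub]

lemma hz_eq (z : ℂ) (hz : ‖z‖ = 1) :
    ((hcs z : ℂ) + hsn z * I) ^ 2 = z := by
  have h1 := Complex.norm_mul_exp_arg_mul_I z
  rw [hz] at h1
  unfold hcs hsn
  push_cast
  rw [← Complex.exp_mul_I, ← Complex.exp_nat_mul]
  rw [← h1]
  simp
  congr 1
  have : arg (cexp (↑z.arg * I)) = arg z := by
    conv_rhs => rw [← h1]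
    simp
  rw [this]; ring

lemma hz_sq (z : ℂ) : hcs z ^ 2 + hsn z ^ 2 = 1 := Real.cos_sq_add_sin_sq _

lemma norm_frac (x y : ℝ) (h : x ≠ 0 ∨ y ≠ 0) :
    ‖((x : ℂ) - y * I) / (x + y * I)‖ = 1 := by
  have hu : (x : ℂ) + y * I ≠ 0 := by
    intro h0
    have h1 := congrArg Complex.re h0
    have h2 := congrArg Complex.im h0
    simp at h1 h2
    tauto
  have : ((x : ℂ) - y * I) = (starRingEnd ℂ) (x + y * I) := by
    simp [sub_eq_add_neg]
  rw [norm_div, this, Complex.norm_conj, div_self (norm_ne_zero_iff.mpr hu)]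

lemma half_frac (x y : ℝ) (h : x ≠ 0 ∨ y ≠ 0) :
    ∃ r : ℝ, r ≠ 0 ∧ hcs (((x : ℂ) - y * I) / (x + y * I)) = r * x ∧
      hsn (((x : ℂ) - y * I) / (x + y * I)) = - (r * y) := by
  have hu : (x : ℂ) + y * I ≠ 0 := by
    intro h0
    have h1 := congrArg Complex.re h0
    have h2 := congrArg Complex.im h0
    simp at h1 h2
    tauto
  have hq := hz_eq _ (norm_frac x y h)
  have hs := hz_sq (((x : ℂ) - y * I) / (x + y * I))
  generalize hcs (((x : ℂ) - y * I) / (x + y * I)) = c at *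
  generalize hsn (((x : ℂ) - y * I) / (x + y * I)) = s at *
  rw [eq_div_iff hu] at hq
  have h1 := congrArg Complex.re hq
  have h2 := congrArg Complex.im hq
  simp [pow_two] at h1 h2
  have hp : 0 < x ^ 2 + y ^ 2 := by
    rcases h with h | h <;> positivity
  -- c y + s x = 0
  have h3 : c * y + s * x = 0 := by
    have e1 : s * (c * y + s * x) = 0 := by linear_combination (x * hs - h1) / 2
    have e2 : c * (c * y + s * x) = 0 := by linear_combination (y * hs + h2) / 2
    linear_combination c * e2 + s * e1 - (c * y + s * x) * hs
  refine ⟨(c * x - s * y) / (x ^ 2 + y ^ 2), ?_, ?_, ?_⟩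
  · apply div_ne_zero _ hp.ne'
    intro h0
    have : (x ^ 2 + y ^ 2) = 0 := by
      linear_combination (c * x - s * y) * h0 + (c * y + s * x) * h3 - (x^2+y^2) * hs
    linarith
  · field_simp
    linear_combination y * h3
  · field_simp
    linear_combination x * h3

lemma mob_eq (a b : ℂ) (z : ℂ) (hz : ‖z‖ = 1) :
    mobius a b z = ((((a.re + b.re) * hcs z + (b.im - a.im) * hsn z : ℝ) : ℂ) -
      ((- ((a.im + b.im) * hcs z + (a.re - b.re) * hsn z) : ℝ) : ℂ) * I) /
      ((((a.re + b.re) * hcs z + (b.im - a.im) * hsn z : ℝ) : ℂ) +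
      ((- ((a.im + b.im) * hcs z + (a.re - b.re) * hsn z) : ℝ) : ℂ) * I) := by
  have hs := hz_sq z
  have hq := hz_eq z hz
  unfold mobius
  have hsC : (hcs z : ℂ) ^ 2 + (hsn z : ℂ) ^ 2 = 1 := by exact_mod_cast hs
  generalize hcs z = c at *
  generalize hsn z = s at *
  have hη : (c : ℂ) + s * I ≠ 0 := by
    intro h0; rw [h0] at hq; rw [← hq] at hz; simp at hz
  conv_rhs => rw [← mul_div_mul_left _ _ hη]
  subst hq
  have hI : I ^ 2 = -1 := Complex.I_sq
  have hca : (starRingEnd ℂ) a = a.re - a.im * I := by apply Complex.ext <;> simp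
  have hcb : (starRingEnd ℂ) b = b.re - b.im * I := by apply Complex.ext <;> simp
  rw [hca, hcb]
  have ha := Complex.re_add_im a
  have hb := Complex.re_add_im b
  push_cast
  generalize (a.re : ℂ) = p at *
  generalize (a.im : ℂ) = q at *
  generalize (b.re : ℂ) = p' at *
  generalize (b.im : ℂ) = q' at *
  subst ha hb
  congr 1
  · linear_combination -(p' + q' * I) * hsC +
      ((p' + q' * I) * s ^ 2 + (c + s * I) * (q * s - q' * s)) * hI
  · linear_combination -(p - q * I) * hsC +
      ((p - q * I) * s ^ 2 + (c + s * I) * (q * s - q' * s)) * hI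

lemma mob_half (a b : ℂ) (hab : ‖a‖ ^ 2 - ‖b‖ ^ 2 = 1) (z : ℂ) (hz : ‖z‖ = 1) :
    ∃ r : ℝ, r ≠ 0 ∧
      hcs (mobius a b z) = r * ((a.re + b.re) * hcs z + (b.im - a.im) * hsn z) ∧
      hsn (mobius a b z) = r * ((a.im + b.im) * hcs z + (a.re - b.re) * hsn z) := by
  rw [← Complex.normSq_eq_norm_sq, ← Complex.normSq_eq_norm_sq, Complex.normSq_apply,
    Complex.normSq_apply] at hab
  have hs := hz_sq z
  have hq := hz_eq z hz
  have key := half_frac ((a.re + b.re) * hcs z + (b.im - a.im) * hsn z)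
    (- ((a.im + b.im) * hcs z + (a.re - b.re) * hsn z)) (by
      by_contra hcon
      push Not at hcon
      obtain ⟨h1, h2⟩ := hcon
      have e1 : hcs z = 0 := by
        linear_combination (a.re - b.re) * h1 + (b.im - a.im) * h2 - hcs z * hab
      have e2 : hsn z = 0 := by
        linear_combination - (a.im + b.im) * h1 - (a.re + b.re) * h2 - hsn z * hab
      rw [e1, e2] at hs; norm_num at hs)
  have hm := mob_eq a b z hz
  rw [hm]
  obtain ⟨r, h0, h1, h2⟩ := key
  exact ⟨r, h0, h1, by rw [h2]; ring⟩

lemma DD_mob (a b : ℂ) (hab : ‖a‖ ^ 2 - ‖b‖ ^ 2 = 1) :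
    ∃ r : ℂ → ℝ, (∀ z, ‖z‖ = 1 → r z ≠ 0) ∧ ∀ z w, ‖z‖ = 1 → ‖w‖ = 1 →
      DD (mobius a b z) (mobius a b w) = r z * r w * DD z w := by
  have h := fun z : {z : ℂ // ‖z‖ = 1} => mob_half a b hab z.1 z.2
  choose r h0 h1 h2 using h
  rw [← Complex.normSq_eq_norm_sq, ← Complex.normSq_eq_norm_sq, Complex.normSq_apply,
    Complex.normSq_apply] at hab
  refine ⟨fun z => if hz : ‖z‖ = 1 then r ⟨z, hz⟩ else 1, ?_, ?_⟩
  · intro z hz; simp [hz, h0]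
  · intro z w hz hw
    simp only [hz, hw, dif_pos]
    have a1 := h1 ⟨z, hz⟩
    have a2 := h2 ⟨z, hz⟩
    have b1 := h1 ⟨w, hw⟩
    have b2 := h2 ⟨w, hw⟩
    simp only at a1 a2 b1 b2
    unfold DD
    rw [a1, a2, b1, b2]
    linear_combination r ⟨z, hz⟩ * r ⟨w, hw⟩ * (hsn w * hcs z - hcs w * hsn z) * hab

lemma CycP_scale {k : ℕ} (z w : Fin k → ℂ) (r : Fin k → ℝ) (hr : ∀ i, r i ≠ 0)
    (h : ∀ i j, DD (w i) (w j) = r i * r j * DD (z i) (z j)) (hz : CycP z) : CycP w := by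
  intro i j l hij hjl
  have := hz i j l hij hjl
  rw [h, h, h]
  have hi := hr i
  have hj := hr j
  have hl := hr l
  have : 0 < (r i * r j * r l) ^ 2 * (DD (z i) (z j) * DD (z j) (z l) * DD (z i) (z l)) := by
    positivity
  linarith

lemma Lam_scale {k : ℕ} (hk : 4 ≤ k) (z w : Fin k → ℂ) (r : Fin k → ℝ) (hr : ∀ i, r i ≠ 0)
    (h : ∀ i j, DD (w i) (w j) = r i * r j * DD (z i) (z j)) : Lam k hk w = Lam k hk z := by
  funext j
  unfold Lam
  rw [h, h, h, h]
  set J : Fin k := ⟨(j : ℕ) + 3, by have := j.isLt; omega⟩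
  have e0 := hr ⟨0, by omega⟩
  have e1 := hr ⟨1, by omega⟩
  have e2 := hr ⟨2, by omega⟩
  have e3 := hr J
  conv_rhs => rw [← mul_div_mul_left _ _ (mul_ne_zero (mul_ne_zero e0 e1) (mul_ne_zero e2 e3))]
  congr 1 <;> ring

lemma CycP.ne {k : ℕ} (hk : 4 ≤ k) {z : Fin k → ℂ} (hz : CycP z) (i j : Fin k) (hij : i ≠ j) :
    DD (z i) (z j) ≠ 0 := by
  have main : ∀ i j : Fin k, i < j → DD (z i) (z j) ≠ 0 := by
    intro i j hij h0
    by_cases hj : (j : ℕ) + 1 < k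
    · have := hz i j ⟨j + 1, hj⟩ hij (by rw [Fin.lt_def]; simp)
      rw [h0] at this; simp at this
    · by_cases hi : 0 < (i : ℕ)
      · have := hz ⟨0, by omega⟩ i j (by rw [Fin.lt_def]; simpa using hi) hij
        rw [h0] at this; simp at this
      · have := hz i ⟨1, by omega⟩ j (by rw [Fin.lt_def]; simp; omega)
          (by rw [Fin.lt_def]; simp; omega)
        rw [h0] at this; simp at this
  rcases lt_or_gt_of_ne hij with h | h
  · exact main i j h
  · rw [DD_anti]; exact neg_ne_zero.mpr (main j i h)

lemma CycP.inj {k : ℕ} (hk : 4 ≤ k) {z : Fin k → ℂ} (hz : CycP z) : Function.Injective z := by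
  intro i j hij
  by_contra hne
  exact hz.ne hk i j hne (by rw [hij, DD_self])

/-- the shift -/
def rr (k : ℕ) : Equiv.Perm (Fin k) := (finRotate k)⁻¹

lemma rr_zero (k : ℕ) (hk : 4 ≤ k) : rr k ⟨0, by omega⟩ = ⟨k - 1, by omega⟩ := by
  obtain ⟨n, rfl⟩ : ∃ n, k = n + 1 := ⟨k - 1, by omega⟩
  unfold rr
  rw [Equiv.Perm.inv_eq_iff_eq]
  have := @finRotate_last n
  rw [show (⟨n + 1 - 1, by omega⟩ : Fin (n+1)) = Fin.last n from rfl, this]; rfl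

lemma rr_succ (k : ℕ) (hk : 4 ≤ k) (i : ℕ) (hi : i + 1 < k) :
    rr k ⟨i + 1, hi⟩ = ⟨i, by omega⟩ := by
  obtain ⟨n, rfl⟩ : ∃ n, k = n + 1 := ⟨k - 1, by omega⟩
  unfold rr
  rw [Equiv.Perm.inv_eq_iff_eq]
  exact (finRotate_of_lt (by omega)).symm

lemma sign_rr (k : ℕ) (hk : 4 ≤ k) : (((Equiv.Perm.sign (rr k) : ℤˣ) : ℤ) : ℝ) = (-1) ^ (k + 1) := by
  obtain ⟨n, rfl⟩ : ∃ n, k = n + 1 := ⟨k - 1, by omega⟩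
  unfold rr
  rw [Equiv.Perm.sign_inv, sign_finRotate]
  push_cast
  rw [pow_add, pow_add]; norm_num

lemma CycP_rr {k : ℕ} (hk : 4 ≤ k) {z : Fin k → ℂ} (hz : CycP z) : CycP (fun i => z (rr k i)) := by
  rintro ⟨i, hi⟩ ⟨j, hj⟩ ⟨l, hl⟩ hij hjl
  rw [Fin.mk_lt_mk] at hij hjl
  obtain ⟨j, rfl⟩ : ∃ n, j = n + 1 := ⟨j - 1, by omega⟩
  obtain ⟨l, rfl⟩ : ∃ n, l = n + 1 := ⟨l - 1, by omega⟩
  dsimp only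
  rw [rr_succ k hk, rr_succ k hk]
  rcases i with _ | i
  · rw [rr_zero k hk]
    have := hz ⟨j, by omega⟩ ⟨l, by omega⟩ ⟨k - 1, by omega⟩ (by rw [Fin.mk_lt_mk]; omega)
      (by rw [Fin.mk_lt_mk]; omega)
    rw [DD_anti (z ⟨j, _⟩) (z ⟨k - 1, _⟩), DD_anti (z ⟨l, _⟩) (z ⟨k - 1, _⟩)]
    linarith
  · rw [rr_succ k hk]
    exact hz _ _ _ (by rw [Fin.mk_lt_mk]; omega) (by rw [Fin.mk_lt_mk]; omega)

lemma one_sub_cr (z0 z1 z2 w : ℂ) (h1 : DD w z1 ≠ 0) (h2 : DD z0 z2 ≠ 0) :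
    1 - (DD w z2 * DD z0 z1) / (DD w z1 * DD z0 z2) =
      (DD z2 z1 * DD w z0) / (DD z2 z0 * DD w z1) := by
  have h3 : DD z2 z0 ≠ 0 := by rw [DD_anti]; exact neg_ne_zero.mpr h2
  rw [DD_anti z0 z2]
  field_simp
  unfold DD
  ring

lemma Lam_rr {k : ℕ} (hk : 4 ≤ k) {z : Fin k → ℂ} (hz : CycP z) :
    Lam k hk (fun i => z (rr k i)) = shiftP k (Lam k hk z) := by
  funext ⟨j, hj⟩
  have hne : ∀ (a b : ℕ) (ha : a < k) (hb : b < k), a ≠ b → DD (z ⟨a, ha⟩) (z ⟨b, hb⟩) ≠ 0 :=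
    fun a b ha hb hab => hz.ne hk _ _ (by simpa using hab)
  have e1 : rr k ⟨1, by omega⟩ = ⟨0, by omega⟩ := rr_succ k hk 0 (by omega)
  have e2 : rr k ⟨2, by omega⟩ = ⟨1, by omega⟩ := rr_succ k hk 1 (by omega)
  have e3 : rr k ⟨j + 3, by omega⟩ = ⟨j + 2, by omega⟩ := rr_succ k hk (j + 2) (by omega)
  unfold shiftP Lam
  simp only [e1, e2, e3, rr_zero k hk]
  have eL : (⟨k - 3 - 1 + 3, by omega⟩ : Fin k) = ⟨k - 1, by omega⟩ := by
    rw [Fin.mk.injEq]; omega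
  rw [eL, one_sub_cr _ _ _ _ (hne _ _ _ _ (by omega)) (hne _ _ _ _ (by omega))]
  have n1 := hne (k-1) 1 (by omega) (by omega) (by omega)
  have n2 := hne 2 0 (by omega) (by omega) (by omega)
  have n3 := hne 2 1 (by omega) (by omega) (by omega)
  split_ifs with h
  · subst h
    simp
  · have eJ : (⟨j - 1 + 3, by omega⟩ : Fin k) = ⟨j + 2, by omega⟩ := by
      rw [Fin.mk.injEq]; omega
    rw [eJ, one_sub_cr _ _ _ _ (hne _ _ _ _ (by omega)) (hne _ _ _ _ (by omega))]
    have n4 := hne (j+2) 0 (by omega) (by omega) (by omega)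
    have n5 := hne (j+2) 1 (by omega) (by omega) (by omega)
    field_simp

lemma cr_lt (z0 z1 z2 w w' : ℂ) (h0 : 0 < DD z0 z1 * DD z1 z2 * DD z0 z2)
    (h : 0 < DD z1 w * DD w w' * DD z1 w') :
    (DD w z2 * DD z0 z1) / (DD w z1 * DD z0 z2) <
      (DD w' z2 * DD z0 z1) / (DD w' z1 * DD z0 z2) := by
  have a1 : DD z0 z2 ≠ 0 := by rintro h'; simp [h'] at h0
  have a2 : DD z1 w ≠ 0 := by rintro h'; simp [h'] at h
  have a3 : DD z1 w' ≠ 0 := by rintro h'; simp [h'] at h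
  rw [← sub_pos]
  rw [DD_anti z1 w, DD_anti z1 w']
  have : (DD w' z2 * DD z0 z1) / (-DD z1 w' * DD z0 z2) - (DD w z2 * DD z0 z1) / (-DD z1 w * DD z0 z2)
    = (DD z0 z1 * DD z1 z2 * DD z0 z2) * (DD z1 w * DD w w' * DD z1 w') /
      (DD z0 z2 * DD z1 w * DD z1 w') ^ 2 := by
    field_simp
    unfold DD
    ring
  rw [this]
  positivity

lemma Lam_mem {k : ℕ} (hk : 4 ≤ k) {z : Fin k → ℂ} (hz : CycP z) : InParam (Lam k hk z) := by
  have hne : ∀ (a b : ℕ) (ha : a < k) (hb : b < k), a ≠ b → DD (z ⟨a, ha⟩) (z ⟨b, hb⟩) ≠ 0 :=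
    fun a b ha hb hab => hz.ne hk _ _ (by simpa using hab)
  have hc : ∀ (a b c : ℕ) (ha : a < k) (hb : b < k) (hc : c < k), a < b → b < c →
      0 < DD (z ⟨a, ha⟩) (z ⟨b, hb⟩) * DD (z ⟨b, hb⟩) (z ⟨c, hc⟩) * DD (z ⟨a, ha⟩) (z ⟨c, hc⟩) :=
    fun a b c ha hb hc hab hbc => hz _ _ _ hab hbc
  have h0 := hc 0 1 2 (by omega) (by omega) (by omega) (by omega) (by omega)
  refine ⟨?_, ?_, ?_⟩
  · rintro ⟨j, hj⟩
    have := cr_lt _ _ _ _ _ h0 (hc 1 2 (j+3) (by omega) (by omega) (by omega) (by omega) (by omega))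
    rw [DD_self, zero_mul, zero_div] at this
    exact this
  · rintro ⟨i, hi⟩ ⟨j, hj⟩ hij
    exact cr_lt _ _ _ _ _ h0 (hc 1 (i+3) (j+3) (by omega) (by omega) (by omega) (by omega)
      (by rw [Fin.mk_lt_mk] at hij; omega))
  · rintro ⟨j, hj⟩
    have h := hc 0 1 (j+3) (by omega) (by omega) (by omega) (by omega) (by omega)
    have := cr_lt _ _ _ (z ⟨j + 3, by omega⟩) (z ⟨0, by omega⟩) h0 (by
      rw [DD_anti (z ⟨0, _⟩) (z ⟨j+3, _⟩), DD_anti (z ⟨0, _⟩) (z ⟨1, _⟩)]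
      linarith)
    have n1 := hne 0 1 (by omega) (by omega) (by omega)
    have n2 := hne 0 2 (by omega) (by omega) (by omega)
    rw [mul_comm (DD (z ⟨0, _⟩) (z ⟨2, _⟩)) , div_self (mul_ne_zero n1 n2)] at this
    exact this

/-- homogeneous coordinates of the standard tuple -/
def sx (k : ℕ) (lam : Fin (k - 3) → ℝ) : Fin k → ℝ := fun j =>
  if h0 : (j : ℕ) = 0 then 1
  else if h1 : (j : ℕ) = 1 then 1
  else if h2 : (j : ℕ) = 2 then 0
  else lam ⟨(j : ℕ) - 3, by have := j.isLt; omega⟩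

def sy (k : ℕ) : Fin k → ℝ := fun j => if (j : ℕ) = 1 then 0 else 1

lemma std_eq (k : ℕ) (lam : Fin (k - 3) → ℝ) (j : Fin k) :
    stdTuple k lam j = ((sx k lam j : ℂ) - sy k j * I) / (sx k lam j + sy k j * I) := by
  unfold stdTuple sx sy
  have h1 : (1 : ℂ) + I ≠ 0 := by
    intro h0
    have h1 := congrArg Complex.re h0
    simp at h1
  split_ifs with a b c
  · omega
  · push_cast
    rw [eq_div_iff (by simpa using h1)]
    ring_nf
    simp
    ring
  · simp
  · simp
  · simp [cayley]

lemma sxy_ne (k : ℕ) (lam : Fin (k - 3) → ℝ) (j : Fin k) : sx k lam j ≠ 0 ∨ sy k j ≠ 0 := by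
  unfold sx sy
  by_cases h : (j : ℕ) = 1 <;> simp [h]

lemma std_norm (k : ℕ) (lam : Fin (k - 3) → ℝ) (j : Fin k) : ‖stdTuple k lam j‖ = 1 := by
  rw [std_eq]; exact norm_frac _ _ (sxy_ne k lam j)

lemma std_DD (k : ℕ) (lam : Fin (k - 3) → ℝ) : ∃ r : Fin k → ℝ, (∀ i, r i ≠ 0) ∧
    ∀ i j, DD (stdTuple k lam i) (stdTuple k lam j) =
      r i * r j * (sx k lam j * sy k i - sy k j * sx k lam i) := by
  choose r h0 h1 h2 using fun j => half_frac _ _ (sxy_ne k lam j)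
  refine ⟨r, h0, fun i j => ?_⟩
  rw [std_eq, std_eq]
  unfold DD
  rw [h1, h1, h2, h2]; ring

set_option linter.unusedSimpArgs false in
lemma std_Cyc (k : ℕ) (lam : Fin (k - 3) → ℝ) (hl : InParam lam) :
    CycP (stdTuple k lam) := by
  obtain ⟨r, h0, h⟩ := std_DD k lam
  intro i j l hij hjl
  rw [h, h, h]
  have hi := h0 i
  have hj := h0 j
  have hl' := h0 l
  suffices hs : 0 < (sx k lam j * sy k i - sy k j * sx k lam i) *
      (sx k lam l * sy k j - sy k l * sx k lam j) * (sx k lam l * sy k i - sy k l * sx k lam i) by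
    have : 0 < (r i * r j * r l) ^ 2 * ((sx k lam j * sy k i - sy k j * sx k lam i) *
      (sx k lam l * sy k j - sy k l * sx k lam j) * (sx k lam l * sy k i - sy k l * sx k lam i)) := by
      positivity
    linarith
  obtain ⟨i, hi⟩ := i
  obtain ⟨j, hj⟩ := j
  obtain ⟨l, hl'⟩ := l
  rw [Fin.mk_lt_mk] at hij hjl
  obtain ⟨p1, p2, p3⟩ := hl
  have X0 : ∀ h : 0 < k, sx k lam ⟨0, h⟩ = 1 := by intro h; simp [sx]
  have X1 : ∀ h : 1 < k, sx k lam ⟨1, h⟩ = 1 := by intro h; simp [sx]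
  have X2 : ∀ h : 2 < k, sx k lam ⟨2, h⟩ = 0 := by intro h; simp [sx]
  have X3 : ∀ a, ∀ h : a + 3 < k, sx k lam ⟨a + 3, h⟩ = lam ⟨a, by omega⟩ := by
    intro a h; simp [sx]
  have Y0 : ∀ h : 0 < k, sy k ⟨0, h⟩ = 1 := by intro h; simp [sy]
  have Y1 : ∀ h : 1 < k, sy k ⟨1, h⟩ = 0 := by intro h; simp [sy]
  have Y2 : ∀ h : 2 < k, sy k ⟨2, h⟩ = 1 := by intro h; simp [sy]
  have Y3 : ∀ a, ∀ h : a + 3 < k, sy k ⟨a + 3, h⟩ = 1 := by intro a h; simp [sy]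
  have q2 : ∀ a b, ∀ ha : a < k - 3, ∀ hb : b < k - 3, a < b → 0 < lam ⟨b, hb⟩ - lam ⟨a, ha⟩ := by
    intro a b ha hb hab
    exact sub_pos.mpr (p2 (by rw [Fin.mk_lt_mk]; exact hab))
  have q3 : ∀ a, ∀ ha : a < k - 3, 0 < 1 - lam ⟨a, ha⟩ := fun a ha => sub_pos.mpr (p3 _)
  have cs : ∀ a : ℕ, a = 0 ∨ a = 1 ∨ a = 2 ∨ ∃ b, a = b + 3 := by
    intro a
    rcases a with _ | _ | _ | a
    · simp
    · simp
    · simp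
    · right; right; right; exact ⟨a, rfl⟩
  rcases cs i with rfl | rfl | rfl | ⟨i, rfl⟩ <;>
  rcases cs j with rfl | rfl | rfl | ⟨j, rfl⟩ <;>
  rcases cs l with rfl | rfl | rfl | ⟨l, rfl⟩ <;>
  first
  | (exfalso; omega)
  | (simp only [X0, X1, X2, X3, Y0, Y1, Y2, Y3]
     norm_num
     done)
  | (simp only [X0, X1, X2, X3, Y0, Y1, Y2, Y3]
     have u1 := p1 ⟨l, by omega⟩
     have u2 := q3 l (by omega)
     have : 0 < lam ⟨l, by omega⟩ * (1 - lam ⟨l, by omega⟩) := by positivity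
     nlinarith)
  | (simp only [X0, X1, X2, X3, Y0, Y1, Y2, Y3]
     have u1 := p1 ⟨j, by omega⟩
     have u2 := q3 j (by omega)
     have u3 := p1 ⟨l, by omega⟩
     have u4 := q3 l (by omega)
     have u5 := q2 j l (by omega) (by omega) (by omega)
     have v1 := mul_pos (mul_pos u2 u4) u5
     have v2 := mul_pos (mul_pos u1 u3) u5
     linarith)
  | (simp only [X0, X1, X2, X3, Y0, Y1, Y2, Y3]
     have u1 := q2 i j (by omega) (by omega) (by omega)
     have u2 := q2 j l (by omega) (by omega) (by omega)
     have u3 := q2 i l (by omega) (by omega) (by omega)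
     have v1 := mul_pos (mul_pos u1 u2) u3
     linarith)

lemma std_Lam (k : ℕ) (hk : 4 ≤ k) (lam : Fin (k - 3) → ℝ) :
    Lam k hk (stdTuple k lam) = lam := by
  obtain ⟨r, h0, h⟩ := std_DD k lam
  funext j
  unfold Lam
  rw [h, h, h, h]
  have e0 := h0 ⟨0, by omega⟩
  have e1 := h0 ⟨1, by omega⟩
  have e2 := h0 ⟨2, by omega⟩
  have e3 := h0 ⟨(j : ℕ) + 3, by have := j.isLt; omega⟩
  simp [sx, sy]
  field_simp

lemma mob_norm (z0 z1 z2 : ℂ) (h : 0 < DD z0 z1 * DD z1 z2 * DD z0 z2) :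
    ∃ a b : ℂ, ‖a‖ ^ 2 - ‖b‖ ^ 2 = 1 ∧ ∀ w, ‖w‖ = 1 → mobius a b w =
      (((DD w z2 * DD z0 z1 : ℝ) : ℂ) - (DD w z1 * DD z0 z2 : ℝ) * I) /
      (((DD w z2 * DD z0 z1 : ℝ) : ℂ) + (DD w z1 * DD z0 z2 : ℝ) * I) := by
  obtain ⟨t, ht, ht2⟩ : ∃ t : ℝ, t ≠ 0 ∧ t ^ 2 * (DD z0 z1 * DD z1 z2 * DD z0 z2) = 1 := by
    refine ⟨(Real.sqrt (DD z0 z1 * DD z1 z2 * DD z0 z2))⁻¹, ?_, ?_⟩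
    · have := Real.sqrt_pos.mpr h
      positivity
    · rw [inv_pow, Real.sq_sqrt h.le, inv_mul_cancel₀ h.ne']
  refine ⟨⟨t / 2 * (DD z0 z1 * hsn z2 + DD z0 z2 * hcs z1),
      - (t / 2 * (DD z0 z2 * hsn z1 - DD z0 z1 * hcs z2))⟩,
    ⟨t / 2 * (DD z0 z1 * hsn z2 - DD z0 z2 * hcs z1),
      - (t / 2 * (DD z0 z2 * hsn z1 + DD z0 z1 * hcs z2))⟩, ?_, ?_⟩
  · rw [← Complex.normSq_eq_norm_sq, ← Complex.normSq_eq_norm_sq, Complex.normSq_apply,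
      Complex.normSq_apply, ← ht2]
    have : DD z1 z2 = hsn z2 * hcs z1 - hcs z2 * hsn z1 := rfl
    rw [this]
    ring
  · intro w hw
    rw [mob_eq _ _ _ hw]
    have htC : (t : ℂ) ≠ 0 := by exact_mod_cast ht
    conv_rhs => rw [← mul_div_mul_left _ _ htC]
    have e1 : DD w z2 = hsn z2 * hcs w - hcs z2 * hsn w := rfl
    have e2 : DD w z1 = hsn z1 * hcs w - hcs z1 * hsn w := rfl
    rw [e1, e2]
    congr 1 <;> · push_cast; ring

lemma exists_g {k : ℕ} (hk : 4 ≤ k) {z : Fin k → ℂ} (hn : ∀ i, ‖z i‖ = 1) (hz : CycP z) :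
    ∃ a b : ℂ, ‖a‖ ^ 2 - ‖b‖ ^ 2 = 1 ∧
      (fun i => mobius a b (z i)) = stdTuple k (Lam k hk z) := by
  have h012 : 0 < DD (z ⟨0, by omega⟩) (z ⟨1, by omega⟩) * DD (z ⟨1, by omega⟩) (z ⟨2, by omega⟩) *
      DD (z ⟨0, by omega⟩) (z ⟨2, by omega⟩) := hz _ _ _ (by simp) (by simp)
  obtain ⟨a, b, hab, hm⟩ := mob_norm _ _ _ h012
  refine ⟨a, b, hab, ?_⟩
  have hne : ∀ (a b : ℕ) (ha : a < k) (hb : b < k), a ≠ b → DD (z ⟨a, ha⟩) (z ⟨b, hb⟩) ≠ 0 :=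
    fun a b ha hb hab => hz.ne hk _ _ (by simpa using hab)
  have n01 := hne 0 1 (by omega) (by omega) (by omega)
  have n02 := hne 0 2 (by omega) (by omega) (by omega)
  have n12 := hne 1 2 (by omega) (by omega) (by omega)
  have n21 := hne 2 1 (by omega) (by omega) (by omega)
  funext i
  rw [hm _ (hn i), std_eq]
  -- proportional vectors give the same quotient
  have prop : ∀ p q x y t : ℝ, t ≠ 0 → p = t * x → q = t * y →
      ((p : ℂ) - q * I) / (p + q * I) = ((x : ℂ) - y * I) / (x + y * I) := by
    intro p q x y t ht hp hq
    have htC : (t : ℂ) ≠ 0 := by exact_mod_cast ht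
    conv_rhs => rw [← mul_div_mul_left _ _ htC]
    rw [hp, hq]
    congr 1 <;> · push_cast; ring
  obtain ⟨i, hi⟩ := i
  by_cases h0 : i = 0
  · subst h0
    apply prop _ _ _ _ (DD (z ⟨0, by omega⟩) (z ⟨1, by omega⟩) * DD (z ⟨0, by omega⟩) (z ⟨2, by omega⟩))
      (mul_ne_zero n01 n02)
    · simp [sx]; ring
    · simp [sy]
  by_cases h1 : i = 1
  · subst h1
    apply prop _ _ _ _ (DD (z ⟨1, by omega⟩) (z ⟨2, by omega⟩) * DD (z ⟨0, by omega⟩) (z ⟨1, by omega⟩))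
      (mul_ne_zero n12 n01)
    · simp [sx]
    · simp [sy, DD_self]
  by_cases h2 : i = 2
  · subst h2
    apply prop _ _ _ _ (DD (z ⟨2, by omega⟩) (z ⟨1, by omega⟩) * DD (z ⟨0, by omega⟩) (z ⟨2, by omega⟩))
      (mul_ne_zero n21 n02)
    · simp [sx, DD_self]
    · simp [sy]
  obtain ⟨j, rfl⟩ : ∃ j, i = j + 3 := ⟨i - 3, by omega⟩
  have n3 := hne (j + 3) 1 (by omega) (by omega) (by omega)
  apply prop _ _ _ _ (DD (z ⟨j + 3, by omega⟩) (z ⟨1, by omega⟩) * DD (z ⟨0, by omega⟩) (z ⟨2, by omega⟩))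
      (mul_ne_zero n3 n02)
  · simp [sx, Lam]
    field_simp
  · simp [sy]

lemma exists_sort {k : ℕ} {z : Fin k → ℂ} (hz : OnCircleInj z) :
    ∃ σ : Equiv.Perm (Fin k), CycP (fun i => z (σ i)) := by
  refine ⟨Tuple.sort (fun i => arg (z i)), ?_⟩
  have hm : Monotone _ := Tuple.monotone_sort (fun i => arg (z i))
  set σ := Tuple.sort (fun i => arg (z i))
  have hs : ∀ i j, i < j → 0 < DD (z (σ i)) (z (σ j)) := by
    intro i j hij
    have h1 : arg (z (σ i)) ≤ arg (z (σ j)) := hm hij.le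
    have h2 : arg (z (σ i)) ≠ arg (z (σ j)) := by
      intro he
      have := Complex.ext_norm_arg (by rw [hz.1, hz.1]) he
      exact hij.ne (σ.injective (hz.2 this))
    have h3 := lt_of_le_of_ne h1 h2
    rw [DD_eq_sin]
    have a1 := Complex.neg_pi_lt_arg (z (σ i))
    have a2 := Complex.arg_le_pi (z (σ j))
    apply Real.sin_pos_of_pos_of_lt_pi <;> linarith
  intro i j l hij hjl
  have := hs i j hij
  have := hs j l hjl
  have := hs i l (hij.trans hjl)
  dsimp only
  positivity

lemma perm_rot {k : ℕ} (hk : 4 ≤ k) {z : Fin k → ℂ} (hz : CycP z) (ρ : Equiv.Perm (Fin k))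
    (hρ : CycP (fun i => z (ρ i))) (h0 : ρ ⟨0, by omega⟩ = ⟨0, by omega⟩) : ρ = 1 := by
  have hpos : ∀ i, i ≠ (⟨0, by omega⟩ : Fin k) → (⟨0, by omega⟩ : Fin k) < i := by
    intro i hi
    rw [Fin.lt_def]
    have : (i : ℕ) ≠ 0 := fun h => hi (Fin.ext h)
    simp; omega
  have hne : ∀ i, i ≠ (⟨0, by omega⟩ : Fin k) → ρ i ≠ (⟨0, by omega⟩ : Fin k) := by
    intro i hi h
    exact hi (ρ.injective (h.trans h0.symm))
  have hm : StrictMono ρ := by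
    intro i j hij
    by_cases hi : i = ⟨0, by omega⟩
    · rw [hi, h0]
      apply hpos
      apply hne
      intro hj
      exact hij.ne (hi.trans hj.symm)
    · have hj : j ≠ ⟨0, by omega⟩ := by
        intro hj
        rw [hj] at hij
        exact absurd hij (not_lt.mpr (hpos i hi).le)
      by_contra hcon
      have hlt : ρ j < ρ i := lt_of_le_of_ne (not_lt.mp hcon) (fun h => hij.ne (ρ.injective h.symm))
      have h1 := hρ ⟨0, by omega⟩ i j (hpos i hi) hij
      have h2 := hz ⟨0, by omega⟩ (ρ j) (ρ i) (hpos _ (hne j hj)) hlt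
      dsimp only at h1
      rw [h0] at h1
      rw [DD_anti (z (ρ i)) (z (ρ j))] at h2
      linarith
  ext i
  have : (hm.orderIsoOfSurjective ρ ρ.surjective) = OrderIso.refl _ := Subsingleton.elim _ _
  have := congrArg (fun e => e i) this
  simpa using congrArg Fin.val this

lemma exists_pow {k : ℕ} (hk : 4 ≤ k) (i : ℕ) (hi : i < k) :
    ∃ m : ℕ, ((rr k) ^ m) ⟨0, by omega⟩ = ⟨i, hi⟩ := by
  have : ∀ m, ∀ hm : m < k, ((rr k) ^ (m + 1)) ⟨0, by omega⟩ = ⟨k - 1 - m, by omega⟩ := by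
    intro m
    induction m with
    | zero => intro hm; simpa using rr_zero k hk
    | succ m ih =>
      intro hm
      rw [pow_succ', Equiv.Perm.mul_apply, ih (by omega)]
      have := rr_succ k hk (k - 1 - (m + 1)) (by omega)
      rw [← this]
      congr 2
      omega
  refine ⟨k - 1 - i + 1, ?_⟩
  rw [this _ (by omega)]
  rw [Fin.mk.injEq]; omega

lemma F_pow {k : ℕ} (hk : 4 ≤ k) (f : (Fin (k - 3) → ℝ) → ℝ)
    (hf : ∀ lam, InParam lam → f lam = (-1 : ℝ) ^ (k + 1) * f (shiftP k lam)) (m : ℕ) :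
    ∀ z : Fin k → ℂ, CycP z → CycP (fun i => z (((rr k) ^ m) i)) ∧
      f (Lam k hk z) = ((Equiv.Perm.sign ((rr k) ^ m) : ℤˣ) : ℤ) *
        f (Lam k hk (fun i => z (((rr k) ^ m) i))) := by
  induction m with
  | zero => intro z hz; simpa using hz
  | succ m ih =>
    intro z hz
    obtain ⟨h1, h2⟩ := ih z hz
    have h3 := CycP_rr hk h1
    have h4 := Lam_rr hk h1
    refine ⟨h3, ?_⟩
    rw [h2, hf _ (Lam_mem hk h1), ← h4, pow_succ (rr k) m, Equiv.Perm.sign_mul, ← sign_rr k hk]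
    rw [Units.val_mul, Int.cast_mul]
    simp only [Equiv.Perm.mul_apply]
    ring

lemma sign_sq {k : ℕ} (σ : Equiv.Perm (Fin k)) :
    (((Equiv.Perm.sign σ : ℤˣ) : ℤ) : ℝ) * (((Equiv.Perm.sign σ : ℤˣ) : ℤ) : ℝ) = 1 := by
  rcases Int.units_eq_one_or (Equiv.Perm.sign σ) with h | h <;> rw [h] <;> norm_num

lemma F_wd {k : ℕ} (hk : 4 ≤ k) (f : (Fin (k - 3) → ℝ) → ℝ)
    (hf : ∀ lam, InParam lam → f lam = (-1 : ℝ) ^ (k + 1) * f (shiftP k lam))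
    (z : Fin k → ℂ) (σ τ : Equiv.Perm (Fin k)) (hσ : CycP (fun i => z (σ i)))
    (hτ : CycP (fun i => z (τ i))) :
    ((Equiv.Perm.sign σ : ℤˣ) : ℤ) * f (Lam k hk (fun i => z (σ i))) =
    ((Equiv.Perm.sign τ : ℤˣ) : ℤ) * f (Lam k hk (fun i => z (τ i))) := by
  obtain ⟨m, hm⟩ := exists_pow hk ((τ⁻¹ * σ) ⟨0, by omega⟩ : Fin k) (Fin.isLt _)
  obtain ⟨h1, h2⟩ := F_pow hk f hf m _ hτ
  have h3 : (τ * (rr k) ^ m)⁻¹ * σ = 1 := by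
    apply perm_rot hk h1
    · simpa using hσ
    · rw [mul_inv_rev, mul_assoc, Equiv.Perm.mul_apply, Equiv.Perm.inv_eq_iff_eq, hm]
  have h4 : σ = τ * (rr k) ^ m := (inv_mul_eq_one.mp h3).symm
  rw [h2, h4, Equiv.Perm.sign_mul]
  rw [Units.val_mul, Int.cast_mul]
  simp only [Equiv.Perm.mul_apply]
  ring

/-- **The restriction map is a bijection.** For `k ≥ 4`, restriction
`res(c)(λ) = c(-i, 1, -1, 𝒞(λ₁), …, 𝒞(λ_{k-3}))` maps `G`-invariant alternating functions on
pairwise distinct tuples of points of `S¹` bijectively onto functions on `P_{k-3}` satisfying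
`f(λ) = (-1)^{k+1}·f(shift λ)`; i.e. the restriction satisfies this symmetry, the restriction
determines the function on pairwise distinct circle tuples, and every such `f` arises. -/
theorem restriction_bijection (k : ℕ) (hk : 4 ≤ k) :
    (∀ c : (Fin k → ℂ) → ℝ, IsAlternating c → IsGInvariant c →
      ∀ lam : Fin (k - 3) → ℝ, InParam lam →
        c (stdTuple k lam) = (-1 : ℝ) ^ (k + 1) * c (stdTuple k (shiftP k lam))) ∧
    (∀ c₁ c₂ : (Fin k → ℂ) → ℝ, IsAlternating c₁ → IsGInvariant c₁ →
      IsAlternating c₂ → IsGInvariant c₂ →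
      (∀ lam : Fin (k - 3) → ℝ, InParam lam →
        c₁ (stdTuple k lam) = c₂ (stdTuple k lam)) →
      ∀ z : Fin k → ℂ, OnCircleInj z → c₁ z = c₂ z) ∧
    (∀ f : (Fin (k - 3) → ℝ) → ℝ,
      (∀ lam : Fin (k - 3) → ℝ, InParam lam →
        f lam = (-1 : ℝ) ^ (k + 1) * f (shiftP k lam)) →
      ∃ c : (Fin k → ℂ) → ℝ, IsAlternating c ∧ IsGInvariant c ∧
        ∀ lam : Fin (k - 3) → ℝ, InParam lam → c (stdTuple k lam) = f lam) := by
  refine ⟨?_, ?_, ?_⟩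
  · intro c ha hg lam hlam
    have hc := std_Cyc k lam hlam
    have hn := std_norm k lam
    have hc' := CycP_rr hk hc
    obtain ⟨a, b, hab, he⟩ := exists_g hk (fun i => hn (rr k i)) hc'
    have h1 := ha (rr k) _ ⟨hn, hc.inj hk⟩
    have h2 := hg a b hab _ ⟨fun i => hn (rr k i), hc'.inj hk⟩
    rw [he, Lam_rr hk hc, std_Lam] at h2
    rw [h2, h1, ← sign_rr k hk, ← mul_assoc, sign_sq, one_mul]
  · intro c₁ c₂ ha1 hg1 ha2 hg2 h z hz
    obtain ⟨σ, hσ⟩ := exists_sort hz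
    obtain ⟨a, b, hab, he⟩ := exists_g hk (fun i => hz.1 (σ i)) hσ
    have hz' : OnCircleInj (fun i => z (σ i)) := ⟨fun i => hz.1 (σ i), hσ.inj hk⟩
    have e1 := hg1 a b hab _ hz'
    have e2 := hg2 a b hab _ hz'
    rw [he] at e1 e2
    have e3 := h _ (Lam_mem hk hσ)
    rw [e1, e2, ha1 σ z hz, ha2 σ z hz] at e3
    have := congrArg (fun t => (((Equiv.Perm.sign σ : ℤˣ) : ℤ) : ℝ) * t) e3
    simpa only [← mul_assoc, sign_sq, one_mul] using this
  · intro f hf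
    classical
    let c : (Fin k → ℂ) → ℝ := fun z =>
      if h : ∃ σ : Equiv.Perm (Fin k), CycP (fun i => z (σ i)) then
        ((Equiv.Perm.sign h.choose : ℤˣ) : ℤ) * f (Lam k hk (fun i => z (h.choose i)))
      else 0
    have hc : ∀ z (σ : Equiv.Perm (Fin k)), CycP (fun i => z (σ i)) →
        c z = ((Equiv.Perm.sign σ : ℤˣ) : ℤ) * f (Lam k hk (fun i => z (σ i))) := by
      intro z σ hσ
      have h : ∃ σ : Equiv.Perm (Fin k), CycP (fun i => z (σ i)) := ⟨σ, hσ⟩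
      simp only [c, dif_pos h]
      exact F_wd hk f hf z _ _ h.choose_spec hσ
    refine ⟨c, ?_, ?_, ?_⟩
    · intro τ z hz
      obtain ⟨σ, hσ⟩ := exists_sort hz
      rw [hc z σ hσ, hc (fun i => z (τ i)) (τ⁻¹ * σ) (by simpa using hσ)]
      rw [Equiv.Perm.sign_mul, Equiv.Perm.sign_inv]
      push_cast
      simp
      ring
    · intro a b hab z hz
      obtain ⟨σ, hσ⟩ := exists_sort hz
      obtain ⟨r, hr, hD⟩ := DD_mob a b hab
      have hD' : ∀ i j, DD (mobius a b (z (σ i))) (mobius a b (z (σ j))) =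
          r (z (σ i)) * r (z (σ j)) * DD (z (σ i)) (z (σ j)) :=
        fun i j => hD _ _ (hz.1 _) (hz.1 _)
      have hr' : ∀ i, r (z (σ i)) ≠ 0 := fun i => hr _ (hz.1 _)
      have h1 := CycP_scale (fun i => z (σ i)) (fun i => mobius a b (z (σ i))) _ hr' hD' hσ
      have h2 := Lam_scale hk (fun i => z (σ i)) (fun i => mobius a b (z (σ i))) _ hr' hD'
      rw [hc z σ hσ, hc (fun i => mobius a b (z i)) σ h1, h2]
    · intro lam hlam
      have := hc (stdTuple k lam) 1 (by simpa using std_Cyc k lam hlam)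
      rw [this]
      simp [std_Lam]
end

section
/- Let f : (0,1) → ℝ satisfy f(1−x) = −f(x) for all x ∈ (0,1), and let c be a real-valued G-invariant alternating function on pairwise distinct 4-tuples of points of S¹ such that c(z₁, z₂, z₃, z₄) = f(λ) whenever (z₁, z₂, z₃, z₄) is cyclically oriented and λ ∈ (0,1) is the real number equal to the cross ratio [z₂:z₃:z₁:z₄]. Then for all 0 < x < y < 1, the alternating sum Σ_{j=0}^{4} (−1)^j · c(w₀, ..., ŵ_j, ..., w₄), where (w₀, w₁, w₂, w₃, w₄) = (−i, 1, −1, 𝒞(x), 𝒞(y)) and ŵ_j means omitting the j-th entry, equals f(x) − f(y) − f(x/y) − f((y−1)/(x−1)) + f(x(y−1)/(y(x−1))). -/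
open Complex

theorem cayley_eq_exp (t : ℝ) :
    cayley (t : ℂ) = Complex.exp (((Real.pi + 2 * Real.arctan t : ℝ) : ℂ) * Complex.I) := by
  have hc : Real.cos (Real.arctan t) ^ 2 = 1 / (1 + t ^ 2) := Real.cos_sq_arctan t
  have hs : Real.sin (Real.arctan t) = t * Real.cos (Real.arctan t) := by
    have h := Real.tan_mul_cos (Real.cos_arctan_pos t).ne'
    rw [Real.tan_arctan] at h
    exact h.symm
  have hp : (1 + t ^ 2) ≠ 0 := by positivity
  have hne : (t : ℂ) + Complex.I ≠ 0 := by
    intro h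
    have := congrArg Complex.im h
    simp at this
  rw [Complex.exp_mul_I, ← Complex.ofReal_cos, ← Complex.ofReal_sin,
    add_comm Real.pi, Real.cos_add_pi, Real.sin_add_pi, Real.cos_two_mul, Real.sin_two_mul, hs]
  have e : 2 * (t * Real.cos (Real.arctan t)) * Real.cos (Real.arctan t)
      = 2 * t * Real.cos (Real.arctan t) ^ 2 := by ring
  rw [e]
  have hq : Real.cos (Real.arctan t) ^ 2 * (1 + t ^ 2) = 1 := by
    rw [hc]; field_simp
  generalize Real.cos (Real.arctan t) ^ 2 = q at hq
  unfold cayley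
  rw [div_eq_iff hne]
  apply Complex.ext
  · simp
    ring
  · simp [pow_two]
    linear_combination 2 * hq

theorem cyc_four (a b c d : ℝ) (z₀ z₁ z₂ z₃ : ℂ) (hab : a < b) (hbc : b < c) (hcd : c < d)
    (hda : d < a + 2 * Real.pi) (h0 : z₀ = Complex.exp (a * Complex.I))
    (h1 : z₁ = Complex.exp (b * Complex.I)) (h2 : z₂ = Complex.exp (c * Complex.I))
    (h3 : z₃ = Complex.exp (d * Complex.I)) : CyclicallyOriented ![z₀, z₁, z₂, z₃] := by
  refine ⟨![a, b, c, d], ?_, ?_, ?_⟩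
  · rw [Fin.strictMono_iff_lt_succ]
    intro i
    fin_cases i <;> simp <;> assumption
  · intro i j
    fin_cases i <;> fin_cases j <;> simp <;> linarith [Real.pi_pos]
  · intro j
    fin_cases j <;> simp <;> assumption

/-- **The reduced differential `τ³` in cross ratio coordinates.** If `c` is the `G`-invariant
alternating extension of `f`, then the homogeneous differential `δ³c` evaluated at
`(-i, 1, -1, 𝒞(x), 𝒞(y))` is the 5-term (Spence–Abel) expression in `f`. -/
theorem tau3_formula (f : ℝ → ℝ) (hf : ∀ x ∈ Set.Ioo (0:ℝ) 1, f (1 - x) = -f x)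
    (c : (Fin 4 → ℂ) → ℝ) (halt : IsAlternating c) (hinv : IsGInvariant c)
    (hres : ∀ z : Fin 4 → ℂ, CyclicallyOriented z → ∀ lam : ℝ, lam ∈ Set.Ioo (0:ℝ) 1 →
      crossRatio (z 1) (z 2) (z 0) (z 3) = (lam : ℂ) → c z = f lam)
    (x y : ℝ) (hx : 0 < x) (hxy : x < y) (hy : y < 1) :
    c ![(1 : ℂ), -1, cayley (x : ℂ), cayley (y : ℂ)]
        - c ![-Complex.I, -1, cayley (x : ℂ), cayley (y : ℂ)]
        + c ![-Complex.I, 1, cayley (x : ℂ), cayley (y : ℂ)]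
        - c ![-Complex.I, 1, -1, cayley (y : ℂ)]
        + c ![-Complex.I, 1, -1, cayley (x : ℂ)]
      = f x - f y - f (x / y) - f ((y - 1) / (x - 1)) + f (x * (y - 1) / (y * (x - 1))) := by
  have hpi := Real.pi_pos
  have ax0 : 0 < Real.arctan x := Real.arctan_pos.2 hx
  have axy : Real.arctan x < Real.arctan y := Real.arctan_strictMono hxy
  have ay1 : Real.arctan y < Real.pi / 4 := by
    rw [← Real.arctan_one]; exact Real.arctan_strictMono hy
  have em1 : (-1 : ℂ) = Complex.exp ((Real.pi : ℝ) * Complex.I) := Complex.exp_pi_mul_I.symm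
  have e1 : (1 : ℂ) = Complex.exp ((0 : ℝ) * Complex.I) := by simp
  have eI : -Complex.I = Complex.exp ((-(Real.pi / 2) : ℝ) * Complex.I) := by
    rw [Complex.exp_mul_I, ← Complex.ofReal_cos, ← Complex.ofReal_sin]; simp
  have ex := cayley_eq_exp x
  have ey := cayley_eq_exp y
  have hnx : (x : ℂ) + Complex.I ≠ 0 := fun h => by simpa using congrArg Complex.im h
  have hny : (y : ℂ) + Complex.I ≠ 0 := fun h => by simpa using congrArg Complex.im h
  have hy0 : 0 < y := hx.trans hxy
  have hx1 : x < 1 := hxy.trans hy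
  have hyc : (y : ℂ) ≠ 0 := by exact_mod_cast hy0.ne'
  have hx1c : (1 : ℂ) - x ≠ 0 := by exact_mod_cast (sub_pos.2 hx1).ne'
  have hI := Complex.I_sq
  have dx1 : cayley x - 1 = -2 * Complex.I / (x + Complex.I) := by
    unfold cayley; field_simp; ring
  have dym1 : (-1 : ℂ) - cayley y = -2 * y / (y + Complex.I) := by
    unfold cayley; field_simp; ring
  have dxm1 : (-1 : ℂ) - cayley x = -2 * x / (x + Complex.I) := by
    unfold cayley; field_simp; ring
  have dy1 : 1 - cayley y = 2 * Complex.I / (y + Complex.I) := by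
    unfold cayley; field_simp; ring
  have dx1' : 1 - cayley x = 2 * Complex.I / (x + Complex.I) := by
    unfold cayley; field_simp; ring
  have dxy : cayley x - cayley y
      = 2 * Complex.I * (x - y) / ((x + Complex.I) * (y + Complex.I)) := by
    unfold cayley; field_simp; ring
  have dxI : cayley x - -Complex.I = -(1 + Complex.I) * (1 - x) / (x + Complex.I) := by
    unfold cayley; field_simp; linear_combination hI
  have hI1 : (1 : ℂ) + Complex.I ≠ 0 := fun h => by simpa using congrArg Complex.im h
  have hI2 : (-1 : ℂ) + Complex.I ≠ 0 := fun h => by simpa using congrArg Complex.im h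
  have hI0 := Complex.I_ne_zero
  have t0 : c ![(1 : ℂ), -1, cayley (x : ℂ), cayley (y : ℂ)] = f (1 - x / y) := by
    refine hres _ (cyc_four _ _ _ _ _ _ _ _ ?_ ?_ ?_ ?_ e1 em1 ex ey) _ ⟨?_, ?_⟩ ?_
    · linarith
    · linarith
    · linarith
    · linarith
    · rw [sub_pos, div_lt_one hy0]; exact hxy
    · have := div_pos hx hy0
      linarith
    · change crossRatio (-1) (cayley x) 1 (cayley y) = _
      unfold crossRatio
      rw [dx1, dym1, dxy]
      push_cast
      field_simp
      ring
  have t1 : c ![-Complex.I, -1, cayley (x : ℂ), cayley (y : ℂ)]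
      = f (1 - x * (y - 1) / (y * (x - 1))) := by
    have e : x * (y - 1) / (y * (x - 1)) = x * (1 - y) / (y * (1 - x)) := by
      rw [← neg_sub 1 y, ← neg_sub 1 x, mul_neg, mul_neg, neg_div_neg_eq]
    rw [e]
    have hp : 0 < y * (1 - x) := mul_pos hy0 (sub_pos.2 hx1)
    refine hres _ (cyc_four _ _ _ _ _ _ _ _ ?_ ?_ ?_ ?_ eI em1 ex ey) _ ⟨?_, ?_⟩ ?_
    · linarith
    · linarith
    · linarith
    · linarith
    · rw [sub_pos, div_lt_one hp]; nlinarith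
    · have := div_pos (mul_pos hx (sub_pos.2 hy)) hp
      linarith
    · change crossRatio (-1) (cayley x) (-Complex.I) (cayley y) = _
      unfold crossRatio
      have k1 : -(1 + Complex.I) = Complex.I * (Complex.I - 1) * 1 := by
        linear_combination -hI
      have k2 : (-1 : ℂ) - -Complex.I = Complex.I - 1 := by ring
      have k3 : Complex.I - 1 ≠ 0 := fun h => by simpa using congrArg Complex.im h
      rw [dxI, dym1, dxy, k1, k2]
      push_cast
      field_simp
      ring
  have t2 : c ![-Complex.I, 1, cayley (x : ℂ), cayley (y : ℂ)] = f (1 - (y - 1) / (x - 1)) := by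
    have e : (y - 1) / (x - 1) = (1 - y) / (1 - x) := by
      rw [← neg_sub 1 y, ← neg_sub 1 x, neg_div_neg_eq]
    rw [e]
    have hp : 0 < (1 - x) := (sub_pos.2 hx1)
    refine hres _ (cyc_four _ _ _ _ _ _ _ _ ?_ ?_ ?_ ?_ eI e1 ex ey) _ ⟨?_, ?_⟩ ?_
    · linarith
    · linarith
    · linarith
    · linarith
    · rw [sub_pos, div_lt_one hp]; linarith
    · have := div_pos (sub_pos.2 hy) hp
      linarith
    · change crossRatio 1 (cayley x) (-Complex.I) (cayley y) = _
      unfold crossRatio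
      rw [dxI, dy1, dxy, sub_neg_eq_add]
      push_cast
      field_simp
      ring
  have t3 : ∀ t : ℝ, 0 < t → t < 1 → c ![-Complex.I, 1, -1, cayley (t : ℂ)] = f t := by
    intro t ht0 ht1
    have at0 : 0 < Real.arctan t := Real.arctan_pos.2 ht0
    have at1 : Real.arctan t < Real.pi / 4 := by
      rw [← Real.arctan_one]; exact Real.arctan_strictMono ht1
    have hnt : (t : ℂ) + Complex.I ≠ 0 := fun h => by simpa using congrArg Complex.im h
    refine hres _ (cyc_four _ _ _ _ _ _ _ _ ?_ ?_ ?_ ?_ eI e1 em1 (cayley_eq_exp t)) _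
      ⟨ht0, ht1⟩ ?_
    · linarith
    · linarith
    · linarith
    · linarith
    · change crossRatio 1 (-1) (-Complex.I) (cayley t) = _
      have d1 : (-1 : ℂ) - cayley t = -2 * t / (t + Complex.I) := by
        unfold cayley; field_simp; ring
      have d2 : 1 - cayley t = 2 * Complex.I / (t + Complex.I) := by
        unfold cayley; field_simp; ring
      have d3 : (-1 : ℂ) - -Complex.I ≠ 0 := fun h => by simpa using congrArg Complex.im h
      unfold crossRatio
      rw [d1, d2, div_eq_iff (mul_ne_zero d3 (div_ne_zero (by simp) hnt))]
      field_simp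
      linear_combination (-t : ℂ) * hI
  have m0 : x / y ∈ Set.Ioo (0 : ℝ) 1 := ⟨div_pos hx hy0, (div_lt_one hy0).2 hxy⟩
  have m1 : x * (y - 1) / (y * (x - 1)) ∈ Set.Ioo (0 : ℝ) 1 := by
    have e : x * (y - 1) / (y * (x - 1)) = x * (1 - y) / (y * (1 - x)) := by
      rw [← neg_sub 1 y, ← neg_sub 1 x, mul_neg, mul_neg, neg_div_neg_eq]
    have hp : 0 < y * (1 - x) := mul_pos hy0 (sub_pos.2 hx1)
    rw [e]
    refine ⟨div_pos (mul_pos hx (sub_pos.2 hy)) hp, ?_⟩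
    rw [div_lt_one hp]; nlinarith
  have m2 : (y - 1) / (x - 1) ∈ Set.Ioo (0 : ℝ) 1 := by
    have e : (y - 1) / (x - 1) = (1 - y) / (1 - x) := by
      rw [← neg_sub 1 y, ← neg_sub 1 x, neg_div_neg_eq]
    have hp : 0 < (1 - x) := (sub_pos.2 hx1)
    rw [e]
    refine ⟨div_pos (sub_pos.2 hy) hp, ?_⟩
    rw [div_lt_one hp]; linarith
  rw [t0, t1, t2, t3 y hy0 hy, t3 x hx hx1, hf _ m0, hf _ m1, hf _ m2]
  ring
end

section
/- Let g : {(x,y) : 0 < x < y < 1} → ℝ satisfy g(x,y) = g(1−y, (1−y)/(1−x)) for all 0 < x < y < 1, and let c be a real-valued G-invariant alternating function on pairwise distinct 5-tuples of points of S¹ such that c(z₁, z₂, z₃, z₄, z₅) = g(λ₁, λ₂) whenever (z₁, ..., z₅) is cyclically oriented and λ₁, λ₂ ∈ (0,1) are the real numbers equal to the cross ratios [z₂:z₃:z₁:z₄] and [z₂:z₃:z₁:z₅] respectively. Then for all 0 < x < y < z < 1, the alternating sum Σ_{j=0}^{5} (−1)^j · c(w₀, ..., ŵ_j, ..., w₅),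 where (w₀, ..., w₅) = (−i, 1, −1, 𝒞(x), 𝒞(y), 𝒞(z)) and ŵ_j means omitting the j-th entry, equals −g(x,y) + g(x,z) − g(y,z) + g(x/z, y/z) + g((z−1)/(x−1), (z−1)/(y−1)) − g(x(z−1)/(z(x−1)), y(z−1)/(z(y−1))). -/
open Complex

lemma aux_ne (t : ℝ) : (t : ℂ) + Complex.I ≠ 0 := by
  intro h
  have := congrArg Complex.im h
  simp at this

lemma cay_sub (s t : ℝ) : cayley s - cayley t
    = 2 * Complex.I * ((s : ℂ) - t) / (((s : ℂ) + Complex.I) * ((t : ℂ) + Complex.I)) := by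
  have h1 := aux_ne s
  have h2 := aux_ne t
  unfold cayley
  field_simp
  ring

lemma one_sub_cay (t : ℝ) : 1 - cayley t = 2 * Complex.I / ((t : ℂ) + Complex.I) := by
  have h2 := aux_ne t
  unfold cayley
  field_simp
  ring

lemma cay_sub_one (t : ℝ) : cayley t - 1 = -(2 * Complex.I / ((t : ℂ) + Complex.I)) := by
  rw [← one_sub_cay]; ring

lemma cay_zero : cayley ((0 : ℝ) : ℂ) = -1 := by
  simp [cayley, neg_div]

lemma cay_one : cayley ((1 : ℝ) : ℂ) = -Complex.I := by
  have h := aux_ne 1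
  unfold cayley
  rw [div_eq_iff h]
  push_cast
  linear_combination Complex.I_mul_I

lemma ofReal_sub_ne {s t : ℝ} (h : s ≠ t) : (s : ℂ) - t ≠ 0 := by
  rw [sub_ne_zero]; exact_mod_cast h

lemma cr_fin (a b c d : ℝ) (hbc : b ≠ c) (had : a ≠ d) :
    crossRatio (cayley a) (cayley b) (cayley c) (cayley d)
      = (((a - c) * (b - d) / ((b - c) * (a - d)) : ℝ) : ℂ) := by
  have h1 := aux_ne a
  have h2 := aux_ne b
  have h3 := aux_ne c
  have h4 := aux_ne d
  have h5 := ofReal_sub_ne hbc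
  have h6 := ofReal_sub_ne had
  have hI := Complex.I_ne_zero
  unfold crossRatio
  simp only [cay_sub]
  push_cast
  field_simp

lemma cr_one (b c d : ℝ) (hbc : b ≠ c) :
    crossRatio 1 (cayley b) (cayley c) (cayley d)
      = (((b - d) / (b - c) : ℝ) : ℂ) := by
  have h2 := aux_ne b
  have h3 := aux_ne c
  have h4 := aux_ne d
  have h5 := ofReal_sub_ne hbc
  have hI := Complex.I_ne_zero
  unfold crossRatio
  simp only [cay_sub, one_sub_cay]
  push_cast
  field_simp

lemma cr_three (a b d : ℝ) (had : a ≠ d) :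
    crossRatio (cayley a) (cayley b) 1 (cayley d)
      = (((b - d) / (a - d) : ℝ) : ℂ) := by
  have h1 := aux_ne a
  have h2 := aux_ne b
  have h4 := aux_ne d
  have h6 := ofReal_sub_ne had
  have hI := Complex.I_ne_zero
  unfold crossRatio
  simp only [cay_sub, cay_sub_one]
  push_cast
  field_simp

lemma cay_exp (t : ℝ) :
    cayley t = Complex.exp (((Real.pi + 2 * Real.arctan t : ℝ) : ℂ) * Complex.I) := by
  have h := aux_ne t
  have h1 : (0 : ℝ) < 1 + t ^ 2 := by positivity
  have hs : (Real.sqrt (1 + t ^ 2)) ^ 2 = 1 + t ^ 2 := Real.sq_sqrt h1.le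
  have hc : Real.cos (2 * Real.arctan t) = (1 - t ^ 2) / (1 + t ^ 2) := by
    rw [Real.cos_two_mul, Real.cos_sq_arctan]
    field_simp
    ring
  have hsn : Real.sin (2 * Real.arctan t) = 2 * t / (1 + t ^ 2) := by
    rw [Real.sin_two_mul, Real.sin_arctan, Real.cos_arctan]
    have : Real.sqrt (1 + t ^ 2) ≠ 0 := (Real.sqrt_pos.2 h1).ne'
    field_simp
    rw [hs]
  rw [Complex.exp_mul_I, ← Complex.ofReal_cos, ← Complex.ofReal_sin,
    add_comm Real.pi, Real.cos_add_pi, Real.sin_add_pi, hc, hsn]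
  have h2 : (1 : ℂ) + (t : ℂ) ^ 2 ≠ 0 := by exact_mod_cast h1.ne'
  unfold cayley
  rw [div_eq_iff h]
  push_cast
  field_simp
  linear_combination (2 * (t : ℂ)) * Complex.I_mul_I

lemma cyc5 (w : Fin 5 → ℂ) (a b c d e : ℝ) (h1 : a < b) (h2 : b < c) (h3 : c < d) (h4 : d < e)
    (h5 : e < a + 2 * Real.pi)
    (e0 : w 0 = Complex.exp (a * Complex.I)) (e1 : w 1 = Complex.exp (b * Complex.I))
    (e2 : w 2 = Complex.exp (c * Complex.I)) (e3 : w 3 = Complex.exp (d * Complex.I))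
    (e4 : w 4 = Complex.exp (e * Complex.I)) : CyclicallyOriented w := by
  refine ⟨![a, b, c, d, e], ?_, ?_, ?_⟩
  · rw [Fin.strictMono_iff_lt_succ]
    intro i
    fin_cases i <;> simp <;> assumption
  · intro i j
    fin_cases i <;> fin_cases j <;> simp <;> linarith
  · intro j
    fin_cases j
    exacts [e0, e1, e2, e3, e4]

/-- **The reduced differential `τ⁴` in cross ratio coordinates.** If `c` is the `G`-invariant
alternating extension of `g`, then the homogeneous differential `δ⁴c` evaluated at
`(-i, 1, -1, 𝒞(x), 𝒞(y), 𝒞(z))` is the 6-term expression in `g`. -/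
theorem tau4_formula (g : ℝ → ℝ → ℝ)
    (hg : ∀ x y : ℝ, 0 < x → x < y → y < 1 → g x y = g (1 - y) ((1 - y) / (1 - x)))
    (c : (Fin 5 → ℂ) → ℝ) (halt : IsAlternating c) (hinv : IsGInvariant c)
    (hres : ∀ w : Fin 5 → ℂ, CyclicallyOriented w →
      ∀ lam₁ lam₂ : ℝ, lam₁ ∈ Set.Ioo (0:ℝ) 1 → lam₂ ∈ Set.Ioo (0:ℝ) 1 →
      crossRatio (w 1) (w 2) (w 0) (w 3) = (lam₁ : ℂ) →
      crossRatio (w 1) (w 2) (w 0) (w 4) = (lam₂ : ℂ) → c w = g lam₁ lam₂)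
    (x y z : ℝ) (hx : 0 < x) (hxy : x < y) (hyz : y < z) (hz : z < 1) :
    c ![(1 : ℂ), -1, cayley (x : ℂ), cayley (y : ℂ), cayley (z : ℂ)]
        - c ![-Complex.I, -1, cayley (x : ℂ), cayley (y : ℂ), cayley (z : ℂ)]
        + c ![-Complex.I, 1, cayley (x : ℂ), cayley (y : ℂ), cayley (z : ℂ)]
        - c ![-Complex.I, 1, -1, cayley (y : ℂ), cayley (z : ℂ)]
        + c ![-Complex.I, 1, -1, cayley (x : ℂ), cayley (z : ℂ)]
        - c ![-Complex.I, 1, -1, cayley (x : ℂ), cayley (y : ℂ)]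
      = -g x y + g x z - g y z + g (x / z) (y / z)
          + g ((z - 1) / (x - 1)) ((z - 1) / (y - 1))
          - g (x * (z - 1) / (z * (x - 1))) (y * (z - 1) / (z * (y - 1))) := by
  have hpi := Real.pi_pos
  have ax : 0 < Real.arctan x := Real.arctan_pos.2 hx
  have axy : Real.arctan x < Real.arctan y := Real.arctan_strictMono hxy
  have ayz : Real.arctan y < Real.arctan z := Real.arctan_strictMono hyz
  have az : Real.arctan z < Real.pi / 4 := by
    rw [← Real.arctan_one]; exact Real.arctan_strictMono hz
  have eI : -Complex.I = Complex.exp (((-(Real.pi / 2) : ℝ) : ℂ) * Complex.I) := by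
    rw [Complex.exp_mul_I, ← Complex.ofReal_cos, ← Complex.ofReal_sin]
    simp
  have e1 : (1 : ℂ) = Complex.exp (((0 : ℝ) : ℂ) * Complex.I) := by simp
  have en : (-1 : ℂ) = Complex.exp (((Real.pi : ℝ) : ℂ) * Complex.I) := by simp
  have ex := cay_exp x
  have ey := cay_exp y
  have ez := cay_exp z
  have key : ∀ (w : Fin 5 → ℂ), CyclicallyOriented w → ∀ l m : ℝ, 0 < l → l < m → m < 1 →
      crossRatio (w 1) (w 2) (w 0) (w 3) = (l : ℂ) →
      crossRatio (w 1) (w 2) (w 0) (w 4) = (m : ℂ) → c w = g l m := by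
    intro w hw l m h1 h2 h3 h4 h5
    exact hres w hw l m ⟨h1, h2.trans h3⟩ ⟨h1.trans h2, h3⟩ h4 h5
  have B : ∀ s t : ℝ, 0 < s → s < t → t < 1 →
      c ![-Complex.I, 1, -1, cayley (s : ℂ), cayley (t : ℂ)] = g s t := by
    intro s t hs hst ht
    have a1 : 0 < Real.arctan s := Real.arctan_pos.2 hs
    have a2 : Real.arctan s < Real.arctan t := Real.arctan_strictMono hst
    have a3 : Real.arctan t < Real.pi / 4 := by
      rw [← Real.arctan_one]; exact Real.arctan_strictMono ht
    refine key _ (cyc5 _ _ _ _ _ _ ?_ ?_ ?_ ?_ ?_ eI e1 en (cay_exp s) (cay_exp t)) s t hs hst ht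
      ?_ ?_
    any_goals linarith
    · change crossRatio 1 (-1) (-Complex.I) (cayley s) = _
      rw [← cay_zero, ← cay_one, cr_one _ _ _ (by norm_num)]
      norm_num
    · change crossRatio 1 (-1) (-Complex.I) (cayley t) = _
      rw [← cay_zero, ← cay_one, cr_one _ _ _ (by norm_num)]
      norm_num
  have hy : 0 < y := hx.trans hxy
  have hz0 : 0 < z := hy.trans hyz
  have hxz : x < z := hxy.trans hyz
  have hx1 : x < 1 := hxz.trans hz
  have hy1 : y < 1 := hyz.trans hz
  have px : 0 < 1 - x := by linarith
  have py : 0 < 1 - y := by linarith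
  have pz : 0 < 1 - z := by linarith
  have pxy : 0 < y - x := by linarith
  have pyz : 0 < z - y := by linarith
  have pxz : 0 < z - x := by linarith
  have nx : x - 1 ≠ 0 := by linarith
  have ny : y - 1 ≠ 0 := by linarith
  have T0 : c ![(1 : ℂ), -1, cayley (x : ℂ), cayley (y : ℂ), cayley (z : ℂ)]
      = g (x / z) (y / z) := by
    have l1 : 0 < 1 - x / y := by rw [sub_pos, div_lt_one hy]; exact hxy
    have l2 : 1 - x / y < 1 - x / z := by gcongr
    have l3 : 1 - x / z < 1 := by have := div_pos hx hz0; linarith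
    have := hg _ _ l1 l2 l3
    rw [key _ (cyc5 _ _ _ _ _ _ ?_ ?_ ?_ ?_ ?_ e1 en ex ey ez) _ _ l1 l2 l3 ?_ ?_, this]
    any_goals linarith
    · rw [sub_sub_cancel, sub_sub_cancel]
      congr 1; field_simp
    · change crossRatio (-1) (cayley x) 1 (cayley y) = _
      rw [← cay_zero, cr_three _ _ _ hy.ne, zero_sub]
      congr 1; field_simp; ring
    · change crossRatio (-1) (cayley x) 1 (cayley z) = _
      rw [← cay_zero, cr_three _ _ _ hz0.ne, zero_sub]
      congr 1; field_simp; ring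
  have T1 : c ![-Complex.I, -1, cayley (x : ℂ), cayley (y : ℂ), cayley (z : ℂ)]
      = g (x * (z - 1) / (z * (x - 1))) (y * (z - 1) / (z * (y - 1))) := by
    have l1 : 0 < (y - x) / (y * (1 - x)) := by positivity
    have l2 : (y - x) / (y * (1 - x)) < (z - x) / (z * (1 - x)) := by
      rw [div_lt_div_iff₀ (by positivity) (by positivity)]
      have := mul_pos (mul_pos hx px) pyz
      nlinarith
    have l3 : (z - x) / (z * (1 - x)) < 1 := by
      rw [div_lt_one (by positivity)]; nlinarith
    have q1 : 1 - (z - x) / (z * (1 - x)) = x * (z - 1) / (z * (x - 1)) := by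
      have := px.ne'
      have e : x - 1 = -(1 - x) := by ring
      rw [e]; field_simp; ring
    have q2 : 1 - (y - x) / (y * (1 - x)) = x * (y - 1) / (y * (x - 1)) := by
      have := px.ne'
      have e : x - 1 = -(1 - x) := by ring
      rw [e]; field_simp; ring
    have := hg _ _ l1 l2 l3
    rw [key _ (cyc5 _ _ _ _ _ _ ?_ ?_ ?_ ?_ ?_ eI en ex ey ez) _ _ l1 l2 l3 ?_ ?_, this, q1, q2]
    any_goals linarith
    · congr 1; field_simp
    · change crossRatio (-1) (cayley x) (-Complex.I) (cayley y) = _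
      rw [← cay_zero, ← cay_one, cr_fin _ _ _ _ hx1.ne hy.ne, zero_sub, zero_sub]
      congr 1
      have := px.ne'
      have e : x - 1 = -(1 - x) := by ring
      rw [e]; field_simp; ring
    · change crossRatio (-1) (cayley x) (-Complex.I) (cayley z) = _
      rw [← cay_zero, ← cay_one, cr_fin _ _ _ _ hx1.ne hz0.ne, zero_sub, zero_sub]
      congr 1
      have := px.ne'
      have e : x - 1 = -(1 - x) := by ring
      rw [e]; field_simp; ring
  have T2 : c ![-Complex.I, 1, cayley (x : ℂ), cayley (y : ℂ), cayley (z : ℂ)]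
      = g ((z - 1) / (x - 1)) ((z - 1) / (y - 1)) := by
    have l1 : 0 < (y - x) / (1 - x) := by positivity
    have l2 : (y - x) / (1 - x) < (z - x) / (1 - x) := by gcongr
    have l3 : (z - x) / (1 - x) < 1 := by
      rw [div_lt_one (by positivity)]; linarith
    have q1 : 1 - (z - x) / (1 - x) = (z - 1) / (x - 1) := by
      have := px.ne'
      have e : x - 1 = -(1 - x) := by ring
      rw [e]; field_simp; ring
    have q2 : 1 - (y - x) / (1 - x) = (y - 1) / (x - 1) := by
      have := px.ne'
      have e : x - 1 = -(1 - x) := by ring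
      rw [e]; field_simp; ring
    have := hg _ _ l1 l2 l3
    rw [key _ (cyc5 _ _ _ _ _ _ ?_ ?_ ?_ ?_ ?_ eI e1 ex ey ez) _ _ l1 l2 l3 ?_ ?_, this, q1, q2]
    any_goals linarith
    · congr 1; field_simp
    · change crossRatio 1 (cayley x) (-Complex.I) (cayley y) = _
      rw [← cay_one, cr_one _ _ _ hx1.ne]
      congr 1
      have := px.ne'
      have e : x - 1 = -(1 - x) := by ring
      rw [e]; field_simp; ring
    · change crossRatio 1 (cayley x) (-Complex.I) (cayley z) = _
      rw [← cay_one, cr_one _ _ _ hx1.ne]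
      congr 1
      have := px.ne'
      have e : x - 1 = -(1 - x) := by ring
      rw [e]; field_simp; ring
  rw [T0, T1, T2, B y z hy hyz hz, B x z hx hxz hz, B x y hx hxy hy1]
  ring
end

section
/- Let c₁, c₂ : (S¹)⁵ → ℝ be bounded measurable functions that are alternating (c(z_{σ(0)}, ..., z_{σ(4)}) = sgn(σ)·c(z₀, ..., z₄) for every permutation σ), invariant under the diagonal action of G = PU(1,1), and satisfy the cocycle equation Σ_{j=0}^{5} (−1)^j · c(z₀, ..., ẑ_j, ..., z₅) = 0 for all pairwise distinct z₀, ..., z₅ ∈ S¹. Then sup over (φ₁, φ₂) ∈ Ω of |F_{c₁}^♭(φ₁, φ₂) − F_{c₂}^♭(φ₁, φ₂)| is at most 4 times the supremum over (S¹)⁵ of |c₁ − c₂|. -/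
open MeasureTheory Real Complex

/-- The function `r_c(φ) = -(1/2)(1-e^{iφ})·∫_π^φ (1-cos ζ)⁻¹ ⨍⨍⨍ sin(η-ϕ)·
c(e^{iη}, e^{iϕ}, e^{iψ}, 1, e^{iζ}) dη dϕ dψ dζ`, where `⨍ = (1/2π)∫₀^{2π}`. -/
noncomputable def rc (c : (Fin 5 → ℂ) → ℝ) (φ : ℝ) : ℂ :=
  -(1 / 2 : ℂ) * (1 - Complex.exp (φ * Complex.I)) *
    ((∫ ζ in (π : ℝ)..φ, (1 - Real.cos ζ)⁻¹ *
        ((1 / (2 * π)) ^ 3 *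
          ∫ η in (0:ℝ)..(2 * π), ∫ ϕ in (0:ℝ)..(2 * π), ∫ ψ in (0:ℝ)..(2 * π),
            Real.sin (η - ϕ) *
              c ![Complex.exp (η * Complex.I), Complex.exp (ϕ * Complex.I),
                  Complex.exp (ψ * Complex.I), 1, Complex.exp (ζ * Complex.I)]) : ℝ) : ℂ)

/-- `θ₁ ⊖ θ₂`: the unique representative of `θ₁ - θ₂` modulo `2π` in `[0, 2π)`. -/
noncomputable def ominus (θ₁ θ₂ : ℝ) : ℝ := toIcoMod Real.two_pi_pos 0 (θ₁ - θ₂)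

/-- `v_c^♭(θ₁, θ₂) = Im(e^{iθ₁}·r_c(θ₂ ⊖ θ₁))`. -/
noncomputable def vflat (c : (Fin 5 → ℂ) → ℝ) (θ₁ θ₂ : ℝ) : ℝ :=
  (Complex.exp (θ₁ * Complex.I) * rc c (ominus θ₂ θ₁)).im

/-- `F_c^♭(φ₁, φ₂) = ⨍⨍ sin(ϕ)·c(e^{iη}, e^{iϕ}, 1, e^{iφ₁}, e^{iφ₂}) dη dϕ
+ v_c^♭(φ₁, φ₂) - v_c^♭(0, φ₂) + v_c^♭(0, φ₁)`. -/
noncomputable def Fflat (c : (Fin 5 → ℂ) → ℝ) (φ₁ φ₂ : ℝ) : ℝ :=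
  (1 / (2 * π)) ^ 2 *
      (∫ η in (0:ℝ)..(2 * π), ∫ ϕ in (0:ℝ)..(2 * π),
        Real.sin ϕ * c ![Complex.exp (η * Complex.I), Complex.exp (ϕ * Complex.I), 1,
          Complex.exp (φ₁ * Complex.I), Complex.exp (φ₂ * Complex.I)])
    + vflat c φ₁ φ₂ - vflat c 0 φ₂ + vflat c 0 φ₁

/-- `c` satisfies the homogeneous cocycle equation
`Σ_{j=0}^{5} (-1)^j·c(z₀, …, ẑ_j, …, z₅) = 0` on pairwise distinct tuples of points of `S¹`. -/
def IsCocycle (c : (Fin 5 → ℂ) → ℝ) : Prop :=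
  ∀ z : Fin 6 → ℂ, (∀ j, ‖z j‖ = 1) → Function.Injective z →
    ∑ j : Fin 6, (-1 : ℝ) ^ (j : ℕ) * c (fun i => z (j.succAbove i)) = 0

/-- Bounded measurable. -/
def BMeas {X : Type*} [MeasurableSpace X] (f : X → ℝ) : Prop :=
  Measurable f ∧ ∃ B : ℝ, ∀ x, |f x| ≤ B

lemma BMeas.slice {X : Type*} [MeasurableSpace X] {f : X → ℝ → ℝ}
    (hf : BMeas (fun p : X × ℝ => f p.1 p.2)) (x : X) : BMeas (f x) :=
  ⟨hf.1.comp (measurable_const.prodMk measurable_id), hf.2.imp fun _ h t => h (x, t)⟩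

lemma BMeas.ii {f : ℝ → ℝ} (hf : BMeas f) (a b : ℝ) : IntervalIntegrable f volume a b := by
  obtain ⟨B, hB⟩ := hf.2
  refine (intervalIntegrable_const (c := B) (μ := volume)).mono_fun
    hf.1.aestronglyMeasurable ?_
  refine Filter.Eventually.of_forall fun t => ?_
  change |f t| ≤ |B|
  exact (hB t).trans (le_abs_self B)

lemma BMeas.integral {X : Type*} [MeasurableSpace X] {f : X → ℝ → ℝ}
    (hf : BMeas (fun p : X × ℝ => f p.1 p.2)) :
    BMeas (fun x => ∫ t in (0:ℝ)..(2 * π), f x t) := by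
  refine ⟨?_, ?_⟩
  · simp only [intervalIntegral.integral_of_le Real.two_pi_pos.le]
    exact (StronglyMeasurable.integral_prod_right
      (f := f) hf.1.stronglyMeasurable).measurable
  · obtain ⟨B, hB⟩ := hf.2
    refine ⟨B * |2 * π - 0|, fun x => ?_⟩
    exact intervalIntegral.norm_integral_le_of_norm_le_const (f := f x) (C := B)
      fun t _ => hB (x, t)

lemma diff_bound {f g : ℝ → ℝ} (hf : BMeas f) (hg : BMeas g) {M : ℝ}
    (h : ∀ t, |f t - g t| ≤ M) :
    |(∫ t in (0:ℝ)..(2 * π), f t) - ∫ t in (0:ℝ)..(2 * π), g t| ≤ 2 * π * M := by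
  rw [← intervalIntegral.integral_sub (hf.ii _ _) (hg.ii _ _)]
  have := intervalIntegral.norm_integral_le_of_norm_le_const (a := 0) (b := 2 * π)
    (f := fun t => f t - g t) (C := M) fun t _ => h t
  rw [sub_zero, abs_of_pos Real.two_pi_pos, mul_comm M] at this
  exact this

lemma circ_norm (t : ℝ) : ‖Complex.exp (t * Complex.I)‖ = 1 := Complex.norm_exp_ofReal_mul_I t

/-- A point of the circle. -/
noncomputable def ept (t : ℝ) : {w : ℂ // ‖w‖ = 1} := ⟨Complex.exp (t * Complex.I), circ_norm t⟩

lemma ept_meas : Measurable ept := by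
  unfold ept
  refine Measurable.subtype_mk ?_
  fun_prop

lemma ept_zero : (ept 0 : ℂ) = 1 := by simp [ept]

lemma vec_norm (a b c d e : ℝ) :
    ∀ j, ‖(![(ept a : ℂ), (ept b : ℂ), (ept c : ℂ), (ept d : ℂ), (ept e : ℂ)] : Fin 5 → ℂ) j‖ = 1 := by
  intro j
  fin_cases j
  · exact (ept a).2
  · exact (ept b).2
  · exact (ept c).2
  · exact (ept d).2
  · exact (ept e).2

lemma c_bmeas (c : (Fin 5 → ℂ) → ℝ)
    (hm : Measurable fun z : Fin 5 → {w : ℂ // ‖w‖ = 1} => c fun j => (z j : ℂ))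
    (hb : ∃ M : ℝ, ∀ z : Fin 5 → ℂ, (∀ j, ‖z j‖ = 1) → |c z| ≤ M)
    {X : Type*} [MeasurableSpace X] (s a₀ a₁ a₂ a₃ a₄ : X → ℝ) (hs : Measurable s)
    (h₀ : Measurable a₀) (h₁ : Measurable a₁) (h₂ : Measurable a₂) (h₃ : Measurable a₃)
    (h₄ : Measurable a₄) :
    BMeas fun x => Real.sin (s x) * c ![(ept (a₀ x) : ℂ), (ept (a₁ x) : ℂ), (ept (a₂ x) : ℂ),
      (ept (a₃ x) : ℂ), (ept (a₄ x) : ℂ)] := by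
  refine ⟨(Real.measurable_sin.comp hs).mul ?_, ?_⟩
  · have h : Measurable fun x => (![ept (a₀ x), ept (a₁ x), ept (a₂ x), ept (a₃ x), ept (a₄ x)] :
        Fin 5 → {w : ℂ // ‖w‖ = 1}) := by
      refine measurable_pi_iff.2 fun j => ?_
      fin_cases j
      · exact ept_meas.comp h₀
      · exact ept_meas.comp h₁
      · exact ept_meas.comp h₂
      · exact ept_meas.comp h₃
      · exact ept_meas.comp h₄
    convert hm.comp h using 2 with x
    simp only [Function.comp]
    congr 1
    funext j
    fin_cases j <;> rfl
  · obtain ⟨B, hB⟩ := hb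
    refine ⟨B, fun x => ?_⟩
    rw [abs_mul]
    exact (mul_le_of_le_one_left (abs_nonneg _) (Real.abs_sin_le_one _)).trans
      (hB _ (vec_norm _ _ _ _ _))

/-- The triple integral. -/
noncomputable def Jc (c : (Fin 5 → ℂ) → ℝ) (ζ : ℝ) : ℝ :=
  ∫ η in (0:ℝ)..(2 * π), ∫ ϕ in (0:ℝ)..(2 * π), ∫ ψ in (0:ℝ)..(2 * π),
    Real.sin (η - ϕ) * c ![(ept η : ℂ), (ept ϕ : ℂ), (ept ψ : ℂ), (ept 0 : ℂ), (ept ζ : ℂ)]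

lemma rc_eq (c : (Fin 5 → ℂ) → ℝ) (φ : ℝ) : rc c φ =
  -(1 / 2 : ℂ) * (1 - Complex.exp (φ * Complex.I)) *
    ((∫ ζ in (π : ℝ)..φ, (1 - Real.cos ζ)⁻¹ * ((1 / (2 * π)) ^ 3 * Jc c ζ) : ℝ) : ℂ) := by
  simp only [Jc, ept_zero]
  rfl

section
variable (c : (Fin 5 → ℂ) → ℝ)
    (hm : Measurable fun z : Fin 5 → {w : ℂ // ‖w‖ = 1} => c fun j => (z j : ℂ))
    (hb : ∃ M : ℝ, ∀ z : Fin 5 → ℂ, (∀ j, ‖z j‖ = 1) → |c z| ≤ M)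

lemma J3 (hm : Measurable fun z : Fin 5 → {w : ℂ // ‖w‖ = 1} => c fun j => (z j : ℂ))
    (hb : ∃ M : ℝ, ∀ z : Fin 5 → ℂ, (∀ j, ‖z j‖ = 1) → |c z| ≤ M) :
    BMeas fun p : ((ℝ × ℝ) × ℝ) × ℝ => Real.sin (p.1.1.2 - p.1.2) *
      c ![(ept p.1.1.2 : ℂ), (ept p.1.2 : ℂ), (ept p.2 : ℂ), (ept 0 : ℂ), (ept p.1.1.1 : ℂ)] :=
  c_bmeas c hm hb _ (fun p : ((ℝ × ℝ) × ℝ) × ℝ => p.1.1.2) (fun p => p.1.2) (fun p => p.2)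
    (fun _ => 0) (fun p => p.1.1.1) (by fun_prop) (by fun_prop) (by fun_prop) (by fun_prop)
    (by fun_prop) (by fun_prop)

lemma J2 (hm : Measurable fun z : Fin 5 → {w : ℂ // ‖w‖ = 1} => c fun j => (z j : ℂ))
    (hb : ∃ M : ℝ, ∀ z : Fin 5 → ℂ, (∀ j, ‖z j‖ = 1) → |c z| ≤ M) :
    BMeas fun p : (ℝ × ℝ) × ℝ => ∫ ψ in (0:ℝ)..(2 * π), Real.sin (p.1.2 - p.2) *
      c ![(ept p.1.2 : ℂ), (ept p.2 : ℂ), (ept ψ : ℂ), (ept 0 : ℂ), (ept p.1.1 : ℂ)] :=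
  BMeas.integral (X := (ℝ × ℝ) × ℝ) (f := fun p ψ => Real.sin (p.1.2 - p.2) *
      c ![(ept p.1.2 : ℂ), (ept p.2 : ℂ), (ept ψ : ℂ), (ept 0 : ℂ), (ept p.1.1 : ℂ)])
      (J3 c hm hb)

lemma J1 (hm : Measurable fun z : Fin 5 → {w : ℂ // ‖w‖ = 1} => c fun j => (z j : ℂ))
    (hb : ∃ M : ℝ, ∀ z : Fin 5 → ℂ, (∀ j, ‖z j‖ = 1) → |c z| ≤ M) :
    BMeas fun p : ℝ × ℝ => ∫ ϕ in (0:ℝ)..(2 * π), ∫ ψ in (0:ℝ)..(2 * π), Real.sin (p.2 - ϕ) *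
      c ![(ept p.2 : ℂ), (ept ϕ : ℂ), (ept ψ : ℂ), (ept 0 : ℂ), (ept p.1 : ℂ)] :=
  BMeas.integral (X := ℝ × ℝ) (f := fun p ϕ => ∫ ψ in (0:ℝ)..(2 * π), Real.sin (p.2 - ϕ) *
      c ![(ept p.2 : ℂ), (ept ϕ : ℂ), (ept ψ : ℂ), (ept 0 : ℂ), (ept p.1 : ℂ)])
      (J2 c hm hb)

lemma J0 (hm : Measurable fun z : Fin 5 → {w : ℂ // ‖w‖ = 1} => c fun j => (z j : ℂ))
    (hb : ∃ M : ℝ, ∀ z : Fin 5 → ℂ, (∀ j, ‖z j‖ = 1) → |c z| ≤ M) : BMeas (Jc c) :=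
  BMeas.integral (X := ℝ) (f := fun ζ η => ∫ ϕ in (0:ℝ)..(2 * π), ∫ ψ in (0:ℝ)..(2 * π),
      Real.sin (η - ϕ) *
      c ![(ept η : ℂ), (ept ϕ : ℂ), (ept ψ : ℂ), (ept 0 : ℂ), (ept ζ : ℂ)])
      (J1 c hm hb)
end

lemma sin_diff (c₁ c₂ : (Fin 5 → ℂ) → ℝ) (M : ℝ)
    (hM : ∀ z : Fin 5 → ℂ, (∀ j, ‖z j‖ = 1) → |c₁ z - c₂ z| ≤ M) (s : ℝ) (z : Fin 5 → ℂ)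
    (hz : ∀ j, ‖z j‖ = 1) : |Real.sin s * c₁ z - Real.sin s * c₂ z| ≤ M := by
  rw [← mul_sub, abs_mul]
  exact (mul_le_of_le_one_left (abs_nonneg _) (Real.abs_sin_le_one _)).trans (hM z hz)

lemma Jdiff (c₁ c₂ : (Fin 5 → ℂ) → ℝ)
    (hm₁ : Measurable fun z : Fin 5 → {w : ℂ // ‖w‖ = 1} => c₁ fun j => (z j : ℂ))
    (hm₂ : Measurable fun z : Fin 5 → {w : ℂ // ‖w‖ = 1} => c₂ fun j => (z j : ℂ))
    (hb₁ : ∃ M : ℝ, ∀ z : Fin 5 → ℂ, (∀ j, ‖z j‖ = 1) → |c₁ z| ≤ M)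
    (hb₂ : ∃ M : ℝ, ∀ z : Fin 5 → ℂ, (∀ j, ‖z j‖ = 1) → |c₂ z| ≤ M)
    (M : ℝ) (hM : ∀ z : Fin 5 → ℂ, (∀ j, ‖z j‖ = 1) → |c₁ z - c₂ z| ≤ M) (ζ : ℝ) :
    |Jc c₁ ζ - Jc c₂ ζ| ≤ 2 * π * (2 * π * (2 * π * M)) := by
  unfold Jc
  refine diff_bound ((J1 c₁ hm₁ hb₁).slice (f := fun ζ η => ∫ ϕ in (0:ℝ)..(2 * π),
      ∫ ψ in (0:ℝ)..(2 * π), Real.sin (η - ϕ) *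
      c₁ ![(ept η : ℂ), (ept ϕ : ℂ), (ept ψ : ℂ), (ept 0 : ℂ), (ept ζ : ℂ)]) ζ)
    ((J1 c₂ hm₂ hb₂).slice (f := fun ζ η => ∫ ϕ in (0:ℝ)..(2 * π),
      ∫ ψ in (0:ℝ)..(2 * π), Real.sin (η - ϕ) *
      c₂ ![(ept η : ℂ), (ept ϕ : ℂ), (ept ψ : ℂ), (ept 0 : ℂ), (ept ζ : ℂ)]) ζ) fun η => ?_
  refine diff_bound ((J2 c₁ hm₁ hb₁).slice (f := fun (p : ℝ × ℝ) ϕ =>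
      ∫ ψ in (0:ℝ)..(2 * π), Real.sin (p.2 - ϕ) *
      c₁ ![(ept p.2 : ℂ), (ept ϕ : ℂ), (ept ψ : ℂ), (ept 0 : ℂ), (ept p.1 : ℂ)]) (ζ, η))
    ((J2 c₂ hm₂ hb₂).slice (f := fun (p : ℝ × ℝ) ϕ =>
      ∫ ψ in (0:ℝ)..(2 * π), Real.sin (p.2 - ϕ) *
      c₂ ![(ept p.2 : ℂ), (ept ϕ : ℂ), (ept ψ : ℂ), (ept 0 : ℂ), (ept p.1 : ℂ)]) (ζ, η))
      fun ϕ => ?_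
  refine diff_bound ((J3 c₁ hm₁ hb₁).slice (f := fun (p : (ℝ × ℝ) × ℝ) ψ =>
      Real.sin (p.1.2 - p.2) *
      c₁ ![(ept p.1.2 : ℂ), (ept p.2 : ℂ), (ept ψ : ℂ), (ept 0 : ℂ), (ept p.1.1 : ℂ)])
      ((ζ, η), ϕ))
    ((J3 c₂ hm₂ hb₂).slice (f := fun (p : (ℝ × ℝ) × ℝ) ψ =>
      Real.sin (p.1.2 - p.2) *
      c₂ ![(ept p.1.2 : ℂ), (ept p.2 : ℂ), (ept ψ : ℂ), (ept 0 : ℂ), (ept p.1.1 : ℂ)])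
      ((ζ, η), ϕ))
      fun ψ => ?_
  exact sin_diff c₁ c₂ M hM _ _ (vec_norm _ _ _ _ _)

lemma first_diff (c₁ c₂ : (Fin 5 → ℂ) → ℝ)
    (hm₁ : Measurable fun z : Fin 5 → {w : ℂ // ‖w‖ = 1} => c₁ fun j => (z j : ℂ))
    (hm₂ : Measurable fun z : Fin 5 → {w : ℂ // ‖w‖ = 1} => c₂ fun j => (z j : ℂ))
    (hb₁ : ∃ M : ℝ, ∀ z : Fin 5 → ℂ, (∀ j, ‖z j‖ = 1) → |c₁ z| ≤ M)
    (hb₂ : ∃ M : ℝ, ∀ z : Fin 5 → ℂ, (∀ j, ‖z j‖ = 1) → |c₂ z| ≤ M)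
    (M : ℝ) (hM : ∀ z : Fin 5 → ℂ, (∀ j, ‖z j‖ = 1) → |c₁ z - c₂ z| ≤ M) (φ₁ φ₂ : ℝ) :
    |(∫ η in (0:ℝ)..(2 * π), ∫ ϕ in (0:ℝ)..(2 * π), Real.sin ϕ *
        c₁ ![(ept η : ℂ), (ept ϕ : ℂ), (ept 0 : ℂ), (ept φ₁ : ℂ), (ept φ₂ : ℂ)]) -
      (∫ η in (0:ℝ)..(2 * π), ∫ ϕ in (0:ℝ)..(2 * π), Real.sin ϕ *
        c₂ ![(ept η : ℂ), (ept ϕ : ℂ), (ept 0 : ℂ), (ept φ₁ : ℂ), (ept φ₂ : ℂ)])|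
      ≤ 2 * π * (2 * π * M) := by
  have K : ∀ c : (Fin 5 → ℂ) → ℝ,
      (Measurable fun z : Fin 5 → {w : ℂ // ‖w‖ = 1} => c fun j => (z j : ℂ)) →
      (∃ M : ℝ, ∀ z : Fin 5 → ℂ, (∀ j, ‖z j‖ = 1) → |c z| ≤ M) →
      BMeas fun p : ℝ × ℝ => (fun η ϕ => Real.sin ϕ *
        c ![(ept η : ℂ), (ept ϕ : ℂ), (ept 0 : ℂ), (ept φ₁ : ℂ), (ept φ₂ : ℂ)]) p.1 p.2 :=
    fun c hm hb => c_bmeas c hm hb _ (fun p : ℝ × ℝ => p.1) (fun p => p.2) (fun _ => 0)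
      (fun _ => φ₁) (fun _ => φ₂) (by fun_prop) (by fun_prop) (by fun_prop) (by fun_prop)
      (by fun_prop) (by fun_prop)
  refine diff_bound (K c₁ hm₁ hb₁).integral (K c₂ hm₂ hb₂).integral fun η => ?_
  refine diff_bound (BMeas.slice (X := ℝ) (f := fun η ϕ => Real.sin ϕ *
      c₁ ![(ept η : ℂ), (ept ϕ : ℂ), (ept 0 : ℂ), (ept φ₁ : ℂ), (ept φ₂ : ℂ)]) (K c₁ hm₁ hb₁) η)
    (BMeas.slice (X := ℝ) (f := fun η ϕ => Real.sin ϕ *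
      c₂ ![(ept η : ℂ), (ept ϕ : ℂ), (ept 0 : ℂ), (ept φ₁ : ℂ), (ept φ₂ : ℂ)]) (K c₂ hm₂ hb₂) η) fun ϕ => ?_
  exact sin_diff c₁ c₂ M hM _ _ (vec_norm _ _ _ _ _)

lemma sin_half_pos {φ : ℝ} (hφ : φ ∈ Set.Ioo (0:ℝ) (2 * π)) {ζ : ℝ} (hζ : ζ ∈ Set.uIcc π φ) :
    0 < Real.sin (ζ / 2) := by
  have hπ := Real.pi_pos
  have h : ζ ∈ Set.Ioo (0:ℝ) (2 * π) :=
    (Set.ordConnected_Ioo.uIcc_subset ⟨hπ, by linarith⟩ hφ) hζ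
  exact Real.sin_pos_of_pos_of_lt_pi (by linarith [h.1]) (by linarith [h.2])

lemma one_sub_cos (ζ : ℝ) : 1 - Real.cos ζ = 2 * Real.sin (ζ / 2) ^ 2 := by
  have h := Real.cos_sq (ζ / 2)
  have h2 := Real.sin_sq_add_cos_sq (ζ / 2)
  rw [show 2 * (ζ / 2) = ζ by ring] at h
  linarith

lemma cont_h {φ : ℝ} (hφ : φ ∈ Set.Ioo (0:ℝ) (2 * π)) :
    IntervalIntegrable (fun ζ => (1 - Real.cos ζ)⁻¹) volume π φ := by
  refine ContinuousOn.intervalIntegrable ?_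
  refine ContinuousOn.inv₀ (by fun_prop) fun ζ hζ => ?_
  rw [one_sub_cos]
  have := sin_half_pos hφ hζ
  positivity

lemma int_h {φ : ℝ} (hφ : φ ∈ Set.Ioo (0:ℝ) (2 * π)) :
    ∫ ζ in π..φ, (1 - Real.cos ζ)⁻¹ = -(Real.cos (φ / 2) / Real.sin (φ / 2)) := by
  have := intervalIntegral.integral_eq_sub_of_hasDerivAt (a := π) (b := φ)
    (f := fun ζ => -(Real.cos (ζ / 2) / Real.sin (ζ / 2))) (f' := fun ζ => (1 - Real.cos ζ)⁻¹)
    (fun ζ hζ => by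
      have hs := sin_half_pos hφ hζ
      have h1 : HasDerivAt (fun x : ℝ => x / 2) (1 / 2) ζ := (hasDerivAt_id ζ).div_const 2
      have := ((h1.cos).div (h1.sin) hs.ne').neg
      refine this.congr_deriv ?_
      rw [one_sub_cos]
      have h2 := Real.sin_sq_add_cos_sq (ζ / 2)
      field_simp
      linarith) (cont_h hφ)
  rw [this]
  simp

lemma rc_diff (c₁ c₂ : (Fin 5 → ℂ) → ℝ)
    (hm₁ : Measurable fun z : Fin 5 → {w : ℂ // ‖w‖ = 1} => c₁ fun j => (z j : ℂ))
    (hm₂ : Measurable fun z : Fin 5 → {w : ℂ // ‖w‖ = 1} => c₂ fun j => (z j : ℂ))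
    (hb₁ : ∃ M : ℝ, ∀ z : Fin 5 → ℂ, (∀ j, ‖z j‖ = 1) → |c₁ z| ≤ M)
    (hb₂ : ∃ M : ℝ, ∀ z : Fin 5 → ℂ, (∀ j, ‖z j‖ = 1) → |c₂ z| ≤ M)
    (M : ℝ) (hM : ∀ z : Fin 5 → ℂ, (∀ j, ‖z j‖ = 1) → |c₁ z - c₂ z| ≤ M) (hM0 : 0 ≤ M)
    {φ : ℝ} (hφ' : φ ∈ Set.Ico (0:ℝ) (2 * π)) : ‖rc c₁ φ - rc c₂ φ‖ ≤ M := by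
  rcases hφ'.1.eq_or_lt with h0 | h0
  · subst h0
    simpa [rc] using hM0
  have hφ : φ ∈ Set.Ioo (0:ℝ) (2 * π) := ⟨h0, hφ'.2⟩
  have hs := sin_half_pos hφ Set.right_mem_uIcc
  have hπ := Real.pi_pos
  have ii : ∀ c : (Fin 5 → ℂ) → ℝ, BMeas (Jc c) → IntervalIntegrable
      (fun ζ => (1 - Real.cos ζ)⁻¹ * ((1 / (2 * π)) ^ 3 * Jc c ζ)) volume π φ := by
    intro c hJ
    obtain ⟨B, hB⟩ := hJ.2
    have h2 := (cont_h hφ).mul_const ((1 / (2 * π)) ^ 3 * B)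
    refine h2.mono_fun ?_ (Filter.Eventually.of_forall fun t => ?_)
    · refine Measurable.aestronglyMeasurable ?_
      have := hJ.1
      fun_prop
    · beta_reduce
      rw [norm_mul, norm_mul, norm_mul, norm_mul]
      gcongr
      exact (hB t).trans (le_abs_self B)
  have key : |(∫ ζ in (π : ℝ)..φ, (1 - Real.cos ζ)⁻¹ * ((1 / (2 * π)) ^ 3 * Jc c₁ ζ)) -
      ∫ ζ in (π : ℝ)..φ, (1 - Real.cos ζ)⁻¹ * ((1 / (2 * π)) ^ 3 * Jc c₂ ζ)| ≤
      |Real.cos (φ / 2) / Real.sin (φ / 2)| * M := by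
    rw [← intervalIntegral.integral_sub (ii c₁ (J0 c₁ hm₁ hb₁)) (ii c₂ (J0 c₂ hm₂ hb₂))]
    have := intervalIntegral.norm_integral_le_abs_of_norm_le (μ := volume) (a := π) (b := φ)
      (f := fun ζ => (1 - Real.cos ζ)⁻¹ * ((1 / (2 * π)) ^ 3 * Jc c₁ ζ) -
        (1 - Real.cos ζ)⁻¹ * ((1 / (2 * π)) ^ 3 * Jc c₂ ζ))
      (g := fun ζ => (1 - Real.cos ζ)⁻¹ * M)
      (Filter.Eventually.of_forall fun ζ => by
        have hJ := Jdiff c₁ c₂ hm₁ hm₂ hb₁ hb₂ M hM ζ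
        rw [← mul_sub, ← mul_sub, Real.norm_eq_abs, abs_mul, abs_mul]
        have hc : 0 ≤ (1 - Real.cos ζ)⁻¹ := inv_nonneg.2 (by linarith [Real.cos_le_one ζ])
        rw [abs_of_nonneg hc, abs_of_nonneg (by positivity : (0:ℝ) ≤ (1 / (2 * π)) ^ 3)]
        refine mul_le_mul_of_nonneg_left ?_ hc
        refine (mul_le_mul_of_nonneg_left hJ (by positivity)).trans (le_of_eq ?_)
        field_simp) ((cont_h hφ).mul_const M)
    rw [intervalIntegral.integral_mul_const, int_h hφ, abs_mul, abs_neg, abs_of_nonneg hM0] at this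
    exact this
  rw [rc_eq, rc_eq, ← mul_sub, ← Complex.ofReal_sub, norm_mul, norm_mul, Complex.norm_real,
    Real.norm_eq_abs]
  have hn : ‖(1:ℂ) - Complex.exp (φ * Complex.I)‖ = 2 * Real.sin (φ / 2) := by
    have h := Complex.norm_exp_I_mul_ofReal_sub_one φ
    rw [norm_sub_rev, mul_comm, h, Real.norm_eq_abs, abs_of_pos (by positivity)]
  rw [hn]
  have hh : ‖-(1 / 2 : ℂ)‖ = 1 / 2 := by simp
  rw [hh]
  calc _ ≤ 1 / 2 * (2 * Real.sin (φ / 2)) * (|Real.cos (φ / 2) / Real.sin (φ / 2)| * M) := by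
        gcongr
    _ = |Real.cos (φ / 2)| * M := by
        rw [abs_div, abs_of_pos hs]; field_simp
    _ ≤ M := mul_le_of_le_one_left hM0 (Real.abs_cos_le_one _)

/-- **Lipschitz estimate for `F_c^♭`.** For bounded measurable alternating `G`-invariant
cocycles `c₁, c₂` on `(S¹)⁵`, one has `|F_{c₁}^♭ - F_{c₂}^♭| ≤ 4·sup|c₁ - c₂|` on
`Ω = {(φ₁,φ₂) ∈ (0,2π)² : φ₁ ≠ φ₂}` (stated via any uniform bound `M` for `|c₁ - c₂|`
over `(S¹)⁵`). -/
theorem Fflat_lipschitz (c₁ c₂ : (Fin 5 → ℂ) → ℝ)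
    (hm₁ : Measurable fun z : Fin 5 → {w : ℂ // ‖w‖ = 1} => c₁ fun j => (z j : ℂ))
    (hm₂ : Measurable fun z : Fin 5 → {w : ℂ // ‖w‖ = 1} => c₂ fun j => (z j : ℂ))
    (hb₁ : ∃ M : ℝ, ∀ z : Fin 5 → ℂ, (∀ j, ‖z j‖ = 1) → |c₁ z| ≤ M)
    (hb₂ : ∃ M : ℝ, ∀ z : Fin 5 → ℂ, (∀ j, ‖z j‖ = 1) → |c₂ z| ≤ M)
    (halt₁ : IsAlternating c₁) (halt₂ : IsAlternating c₂)
    (hinv₁ : IsGInvariant c₁) (hinv₂ : IsGInvariant c₂)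
    (hcoc₁ : IsCocycle c₁) (hcoc₂ : IsCocycle c₂)
    (M : ℝ) (hM : ∀ z : Fin 5 → ℂ, (∀ j, ‖z j‖ = 1) → |c₁ z - c₂ z| ≤ M) :
    ∀ φ₁ φ₂ : ℝ, φ₁ ∈ Set.Ioo (0:ℝ) (2 * π) → φ₂ ∈ Set.Ioo (0:ℝ) (2 * π) → φ₁ ≠ φ₂ →
      |Fflat c₁ φ₁ φ₂ - Fflat c₂ φ₁ φ₂| ≤ 4 * M := by
  intro φ₁ φ₂ _ _ _
  have hπ := Real.pi_pos
  have hM0 : 0 ≤ M := (abs_nonneg _).trans (hM (fun _ => 1) fun _ => by simp)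
  have hv : ∀ θ₁ θ₂ : ℝ, |vflat c₁ θ₁ θ₂ - vflat c₂ θ₁ θ₂| ≤ M := by
    intro θ₁ θ₂
    unfold vflat
    rw [← Complex.sub_im, ← mul_sub]
    refine (Complex.abs_im_le_norm _).trans ?_
    rw [norm_mul, circ_norm, one_mul]
    refine rc_diff c₁ c₂ hm₁ hm₂ hb₁ hb₂ M hM hM0 ?_
    have := toIcoMod_mem_Ico Real.two_pi_pos 0 (θ₂ - θ₁)
    rwa [zero_add] at this
  have hF := first_diff c₁ c₂ hm₁ hm₂ hb₁ hb₂ M hM φ₁ φ₂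
  rw [ept_zero] at hF
  have hF2 := mul_le_mul_of_nonneg_left hF (by positivity : (0:ℝ) ≤ (1 / (2 * π)) ^ 2)
  rw [← abs_of_nonneg (by positivity : (0:ℝ) ≤ (1 / (2 * π)) ^ 2), ← abs_mul, mul_sub,
    abs_of_nonneg (by positivity : (0:ℝ) ≤ (1 / (2 * π)) ^ 2),
    show (1 / (2 * π)) ^ 2 * (2 * π * (2 * π * M)) = M by field_simp] at hF2
  have h1 := abs_le.1 (hv φ₁ φ₂)
  have h2 := abs_le.1 (hv 0 φ₂)
  have h3 := abs_le.1 (hv 0 φ₁)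
  have h4 := abs_le.1 hF2
  simp only [ept] at h4
  unfold Fflat
  rw [abs_le]
  constructor
  · linarith [h1.1, h2.2, h3.1, h4.1]
  · linarith [h1.2, h2.1, h3.2, h4.2]
end

section
/- Let 0 ≤ θ₀ < θ₁ < θ₂ < θ₃ < 2π. Then (1/2π)·∫₀^{2π} c(e^{iψ}, e^{iθ₀}, e^{iθ₁}, e^{iθ₂}, e^{iθ₃}) dψ = −(ζ(2)/(2π))·(θ₀ − θ₁ + θ₂ − θ₃ + π). -/
open Real Complex

/-- `c` is the cocycle `c(z̲) = -(ζ(2)/2)·(-1)^{z̲}` (with `ζ(2) = π²/6`), i.e. whenever a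
permutation `σ` brings the tuple `z̲` into cyclically oriented position, `c(z̲)` equals
`-(ζ(2)/2)·sgn(σ)`. -/
def OrientationProp (c : (Fin 5 → ℂ) → ℝ) : Prop :=
  ∀ (z : Fin 5 → ℂ) (σ : Equiv.Perm (Fin 5)),
    CyclicallyOriented (fun i => z (σ i)) →
    c z = -(π ^ 2 / 6 / 2) * ((Equiv.Perm.sign σ : ℤ) : ℝ)

lemma piece_aux (f : ℝ → ℝ) (a b K : ℝ) (hab : a ≤ b) (h : ∀ x, a < x → x < b → f x = K) :
    IntervalIntegrable f MeasureTheory.volume a b ∧ ∫ x in a..b, f x = K * (b - a) := by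
  have e : Set.EqOn (fun _ : ℝ => K) f (Set.Ioo a b) := fun x hx => (h x hx.1 hx.2).symm
  constructor
  · rw [intervalIntegrable_iff_integrableOn_Ioo_of_le hab]
    refine MeasureTheory.IntegrableOn.congr_fun ?_ e measurableSet_Ioo
    exact MeasureTheory.integrableOn_const (by simp)
  · rw [intervalIntegral.integral_of_le hab, MeasureTheory.integral_Ioc_eq_integral_Ioo,
      ← MeasureTheory.setIntegral_congr_fun measurableSet_Ioo e]
    simp [hab, mul_comm]

lemma cyc_aux (z : Fin 5 → ℂ) (a b c d e : ℝ) (hab : a < b) (hbc : b < c) (hcd : c < d)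
    (hde : d < e) (hea : e < a + 2 * π)
    (h0 : z 0 = Complex.exp (a * Complex.I)) (h1 : z 1 = Complex.exp (b * Complex.I))
    (h2 : z 2 = Complex.exp (c * Complex.I)) (h3 : z 3 = Complex.exp (d * Complex.I))
    (h4 : z 4 = Complex.exp (e * Complex.I)) : CyclicallyOriented z := by
  refine ⟨![a, b, c, d, e], ?_, ?_, ?_⟩
  · rw [Fin.strictMono_iff_lt_succ]
    intro i
    fin_cases i <;> simp <;> assumption
  · intro i j
    fin_cases i <;> fin_cases j <;> simp <;> linarith [Real.pi_pos]
  · intro j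
    fin_cases j <;> simp <;> assumption

/-- **Basic integral I₁.** For `0 ≤ θ₀ < θ₁ < θ₂ < θ₃ < 2π`,
`⨍ c(e^{iψ}, e^{iθ₀}, e^{iθ₁}, e^{iθ₂}, e^{iθ₃}) dψ = -(ζ(2)/(2π))·(θ₀-θ₁+θ₂-θ₃+π)`. -/
theorem basic_integral_I1 (c : (Fin 5 → ℂ) → ℝ) (hc : OrientationProp c)
    (θ₀ θ₁ θ₂ θ₃ : ℝ) (h0 : 0 ≤ θ₀) (h01 : θ₀ < θ₁) (h12 : θ₁ < θ₂) (h23 : θ₂ < θ₃)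
    (h3 : θ₃ < 2 * π) :
    (1 / (2 * π)) * ∫ ψ in (0:ℝ)..(2 * π),
        c ![Complex.exp (ψ * Complex.I), Complex.exp (θ₀ * Complex.I),
            Complex.exp (θ₁ * Complex.I), Complex.exp (θ₂ * Complex.I),
            Complex.exp (θ₃ * Complex.I)]
      = -(π ^ 2 / 6 / (2 * π)) * (θ₀ - θ₁ + θ₂ - θ₃ + π) := by
  set f : ℝ → ℝ := fun ψ => c ![Complex.exp (ψ * Complex.I), Complex.exp (θ₀ * Complex.I),
            Complex.exp (θ₁ * Complex.I), Complex.exp (θ₂ * Complex.I),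
            Complex.exp (θ₃ * Complex.I)] with hf
  have s01 : Equiv.Perm.sign (Equiv.swap (0 : Fin 5) 1) = -1 := by decide
  have s12 : Equiv.Perm.sign (Equiv.swap (1 : Fin 5) 2) = -1 := by decide
  have s23 : Equiv.Perm.sign (Equiv.swap (2 : Fin 5) 3) = -1 := by decide
  obtain ⟨i0, e0⟩ := piece_aux f 0 θ₀ (-(π ^ 2 / 6 / 2)) h0 (fun x hx hx' => by
    rw [hf]
    refine (hc _ 1 (cyc_aux _ x θ₀ θ₁ θ₂ θ₃ (by linarith) (by linarith) (by linarith)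
      (by linarith) (by linarith) rfl rfl rfl rfl rfl)).trans ?_
    simp)
  obtain ⟨i1, e1⟩ := piece_aux f θ₀ θ₁ (π ^ 2 / 6 / 2) h01.le (fun x hx hx' => by
    rw [hf]
    refine (hc _ (Equiv.swap 0 1) (cyc_aux _ θ₀ x θ₁ θ₂ θ₃ (by linarith) (by linarith)
      (by linarith) (by linarith) (by linarith) rfl rfl rfl rfl rfl)).trans ?_
    rw [s01]; simp)
  obtain ⟨i2, e2⟩ := piece_aux f θ₁ θ₂ (-(π ^ 2 / 6 / 2)) h12.le (fun x hx hx' => by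
    rw [hf]
    refine (hc _ (Equiv.swap 0 1 * Equiv.swap 1 2) (cyc_aux _ θ₀ θ₁ x θ₂ θ₃ (by linarith)
      (by linarith) (by linarith) (by linarith) (by linarith) rfl rfl rfl rfl rfl)).trans ?_
    rw [Equiv.Perm.sign_mul, s01, s12]; simp)
  obtain ⟨i3, e3⟩ := piece_aux f θ₂ θ₃ (π ^ 2 / 6 / 2) h23.le (fun x hx hx' => by
    rw [hf]
    refine (hc _ (Equiv.swap 0 1 * Equiv.swap 1 2 * Equiv.swap 2 3) (cyc_aux _ θ₀ θ₁ θ₂ x θ₃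
      (by linarith) (by linarith) (by linarith) (by linarith) (by linarith)
      rfl rfl rfl rfl rfl)).trans ?_
    rw [Equiv.Perm.sign_mul, Equiv.Perm.sign_mul, s01, s12, s23]; simp)
  obtain ⟨i4, e4⟩ := piece_aux f θ₃ (2 * π) (-(π ^ 2 / 6 / 2)) h3.le (fun x hx hx' => by
    rw [hf]
    refine (hc _ 1 (cyc_aux _ (x - 2 * π) θ₀ θ₁ θ₂ θ₃ (by linarith) (by linarith) (by linarith)
      (by linarith) (by linarith) ?_ rfl rfl rfl rfl)).trans ?_
    · have : (((x - 2 * π : ℝ) : ℂ) * Complex.I) = x * Complex.I - 2 * π * Complex.I := by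
        push_cast; ring
      rw [this, Complex.exp_periodic.sub_eq]
      rfl
    · simp)
  have key : ∫ ψ in (0:ℝ)..(2 * π), f ψ = -(π ^ 2 / 6) * (θ₀ - θ₁ + θ₂ - θ₃ + π) := by
    rw [← intervalIntegral.integral_add_adjacent_intervals
        (((i0.trans i1).trans i2).trans i3) i4,
      ← intervalIntegral.integral_add_adjacent_intervals ((i0.trans i1).trans i2) i3,
      ← intervalIntegral.integral_add_adjacent_intervals (i0.trans i1) i2,
      ← intervalIntegral.integral_add_adjacent_intervals i0 i1, e0, e1, e2, e3, e4]
    ring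
  rw [key]
  ring
end

section
/- Let 0 < θ₁ < θ₂ < 2π. Then the iterated average (1/2π)²·∫₀^{2π}∫₀^{2π} e^{iη}·c(e^{iψ}, e^{iη}, 1, e^{iθ₁}, e^{iθ₂}) dη dψ equals −i·(ζ(2)/(2π²))·((e^{iθ₂} − 1)(θ₁ − π) − (e^{iθ₁} − 1)(θ₂ − π) − π). -/
open Real Complex

open MeasureTheory in
lemma piece_int (F : ℝ → ℂ) (p q : ℂ) (a b : ℝ) (hab : a ≤ b)
    (h : ∀ x, a < x → x < b → F x = p + q * Complex.exp (x * Complex.I)) :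
    IntervalIntegrable F volume a b ∧ ∫ x in a..b, F x =
      p * ((b : ℂ) - a) + q * (-Complex.I) *
        (Complex.exp (b * Complex.I) - Complex.exp (a * Complex.I)) := by
  have hI : IntervalIntegrable (fun x : ℝ => p + q * Complex.exp (x * Complex.I)) volume a b :=
    Continuous.intervalIntegrable (by fun_prop) _ _
  have hE : Set.EqOn F (fun x : ℝ => p + q * Complex.exp (x * Complex.I)) (Set.Ioo a b) :=
    fun x hx => h x hx.1 hx.2
  constructor
  · rw [intervalIntegrable_iff_integrableOn_Ioo_of_le hab] at hI ⊢
    exact hI.congr_fun hE.symm measurableSet_Ioo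
  · rw [intervalIntegral.integral_of_le hab, integral_Ioc_eq_integral_Ioo,
      setIntegral_congr_fun measurableSet_Ioo hE, ← integral_Ioc_eq_integral_Ioo,
      ← intervalIntegral.integral_of_le hab]
    have hd : ∀ x ∈ Set.uIcc a b, HasDerivAt
        (fun x : ℝ => p * (x : ℂ) + q * (-Complex.I) * Complex.exp (x * Complex.I))
        (p + q * Complex.exp (x * Complex.I)) x := by
      intro x _
      have h0 : HasDerivAt (fun x : ℝ => (x : ℂ)) 1 x := Complex.ofRealCLM.hasDerivAt
      have h1 := ((h0.mul_const Complex.I).cexp).const_mul (q * (-Complex.I))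
      have h2 := (h0.const_mul p).add h1
      refine h2.congr_deriv ?_
      simp only [one_mul]
      linear_combination (-q * Complex.exp (x * Complex.I)) * Complex.I_sq
    rw [intervalIntegral.integral_eq_sub_of_hasDerivAt hd hI]
    ring

lemma c_val (c : (Fin 5 → ℂ) → ℝ) (hc : OrientationProp c) (z : Fin 5 → ℂ)
    (σ : Equiv.Perm (Fin 5)) (s : ℤ) (hs : (Equiv.Perm.sign σ : ℤ) = s) (a b d e : ℝ)
    (h0 : 0 < a) (h1 : a < b) (h2 : b < d) (h3 : d < e) (h4 : e < 2 * π)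
    (hz : ∀ j, z (σ j) = Complex.exp (((![0, a, b, d, e] j : ℝ) : ℂ) * Complex.I)) :
    c z = -(π ^ 2 / 6 / 2) * (s : ℝ) := by
  rw [hc z σ ⟨![0, a, b, d, e], ?_, ?_, hz⟩, hs]
  · rw [Fin.strictMono_iff_lt_succ]
    intro i
    fin_cases i <;> simpa
  · intro i j
    fin_cases i <;> fin_cases j <;> simp <;> linarith

/-- **Basic integral I₂.** For `0 < θ₁ < θ₂ < 2π`,
`⨍⨍ e^{iη}·c(e^{iψ}, e^{iη}, 1, e^{iθ₁}, e^{iθ₂}) dη dψ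
= -i·(ζ(2)/(2π²))·((e^{iθ₂}-1)(θ₁-π) - (e^{iθ₁}-1)(θ₂-π) - π)`. -/
theorem basic_integral_I2 (c : (Fin 5 → ℂ) → ℝ) (hc : OrientationProp c)
    (θ₁ θ₂ : ℝ) (h1 : 0 < θ₁) (h12 : θ₁ < θ₂) (h2 : θ₂ < 2 * π) :
    (((1 / (2 * π)) ^ 2 : ℝ) : ℂ) *
        ∫ ψ in (0:ℝ)..(2 * π), ∫ η in (0:ℝ)..(2 * π),
          Complex.exp (η * Complex.I) *
            ((c ![Complex.exp (ψ * Complex.I), Complex.exp (η * Complex.I), 1,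
                Complex.exp (θ₁ * Complex.I), Complex.exp (θ₂ * Complex.I)] : ℝ) : ℂ)
      = -Complex.I * (((π ^ 2 / 6) / (2 * π ^ 2) : ℝ) : ℂ) *
          ((Complex.exp (θ₂ * Complex.I) - 1) * ((θ₁ - π : ℝ) : ℂ)
            - (Complex.exp (θ₁ * Complex.I) - 1) * ((θ₂ - π : ℝ) : ℂ) - ((π : ℝ) : ℂ)) := by
  set Z : ℝ → ℝ → (Fin 5 → ℂ) := fun ψ η => ![Complex.exp (ψ * Complex.I),
    Complex.exp (η * Complex.I), 1, Complex.exp (θ₁ * Complex.I), Complex.exp (θ₂ * Complex.I)]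
    with hZ
  set K : ℂ := -((π : ℂ) ^ 2 / 6 / 2) with hK
  set G : ℝ → ℂ := fun ψ => ∫ η in (0:ℝ)..(2 * π), Complex.exp (η * Complex.I) * ((c (Z ψ η) : ℝ) : ℂ)
    with hG
  set a := Complex.exp (θ₁ * Complex.I) with ha
  set b := Complex.exp (θ₂ * Complex.I) with hb
  have e0 : Complex.exp (((0:ℝ):ℂ) * Complex.I) = 1 := by simp
  have e2 : Complex.exp (((2 * π : ℝ):ℂ) * Complex.I) = 1 := by
    push_cast; exact Complex.exp_two_pi_mul_I
  have gA : ∀ ψ : ℝ, 0 < ψ → ψ < θ₁ → G ψ = (-Complex.I * K * (2*a-2*b+2)) + (2 * Complex.I * K) * Complex.exp (ψ * Complex.I) := by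
    intro ψ hl hr
    have k0 := piece_int (fun η : ℝ => Complex.exp (η * Complex.I) * ((c (Z ψ η) : ℝ) : ℂ))
      0 (K * (-1)) (0) (ψ) (by linarith) (by
        intro η g1 g2
        have := c_val c hc (Z ψ η) ⟨![2,1,0,3,4], ![2,1,0,3,4], by decide, by decide⟩
          (-1) (by decide) η ψ θ₁ θ₂ (by linarith) (by linarith) (by linarith) (by linarith)
          (by linarith) (by intro j; fin_cases j <;> simp [hZ, ha, hb])
        simp only [this, hK]
        push_cast
        ring)
    have k1 := piece_int (fun η : ℝ => Complex.exp (η * Complex.I) * ((c (Z ψ η) : ℝ) : ℂ))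
      0 (K * (1)) (ψ) (θ₁) (by linarith) (by
        intro η g1 g2
        have := c_val c hc (Z ψ η) ⟨![2,0,1,3,4], ![1,2,0,3,4], by decide, by decide⟩
          (1) (by decide) ψ η θ₁ θ₂ (by linarith) (by linarith) (by linarith) (by linarith)
          (by linarith) (by intro j; fin_cases j <;> simp [hZ, ha, hb])
        simp only [this, hK]
        push_cast
        ring)
    have k2 := piece_int (fun η : ℝ => Complex.exp (η * Complex.I) * ((c (Z ψ η) : ℝ) : ℂ))
      0 (K * (-1)) (θ₁) (θ₂) (by linarith) (by
        intro η g1 g2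
        have := c_val c hc (Z ψ η) ⟨![2,0,3,1,4], ![1,3,0,2,4], by decide, by decide⟩
          (-1) (by decide) ψ θ₁ η θ₂ (by linarith) (by linarith) (by linarith) (by linarith)
          (by linarith) (by intro j; fin_cases j <;> simp [hZ, ha, hb])
        simp only [this, hK]
        push_cast
        ring)
    have k3 := piece_int (fun η : ℝ => Complex.exp (η * Complex.I) * ((c (Z ψ η) : ℝ) : ℂ))
      0 (K * (1)) (θ₂) (2 * π) (by linarith) (by
        intro η g1 g2
        have := c_val c hc (Z ψ η) ⟨![2,0,3,4,1], ![1,4,0,2,3], by decide, by decide⟩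
          (1) (by decide) ψ θ₁ θ₂ η (by linarith) (by linarith) (by linarith) (by linarith)
          (by linarith) (by intro j; fin_cases j <;> simp [hZ, ha, hb])
        simp only [this, hK]
        push_cast
        ring)
    have i1 := intervalIntegral.integral_add_adjacent_intervals k0.1 k1.1
    have i2 := intervalIntegral.integral_add_adjacent_intervals (k0.1.trans k1.1) k2.1
    have i3 := intervalIntegral.integral_add_adjacent_intervals ((k0.1.trans k1.1).trans k2.1) k3.1
    simp only [hG]
    rw [← i3, ← i2, ← i1, k0.2, k1.2, k2.2, k3.2, e0, e2, ← ha, ← hb]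
    ring
  have gB : ∀ ψ : ℝ, θ₁ < ψ → ψ < θ₂ → G ψ = (-Complex.I * K * (2*a+2*b-2)) + (2 * Complex.I * K) * Complex.exp (ψ * Complex.I) := by
    intro ψ hl hr
    have k0 := piece_int (fun η : ℝ => Complex.exp (η * Complex.I) * ((c (Z ψ η) : ℝ) : ℂ))
      0 (K * (1)) (0) (θ₁) (by linarith) (by
        intro η g1 g2
        have := c_val c hc (Z ψ η) ⟨![2,1,3,0,4], ![3,1,0,2,4], by decide, by decide⟩
          (1) (by decide) η θ₁ ψ θ₂ (by linarith) (by linarith) (by linarith) (by linarith)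
          (by linarith) (by intro j; fin_cases j <;> simp [hZ, ha, hb])
        simp only [this, hK]
        push_cast
        ring)
    have k1 := piece_int (fun η : ℝ => Complex.exp (η * Complex.I) * ((c (Z ψ η) : ℝ) : ℂ))
      0 (K * (-1)) (θ₁) (ψ) (by linarith) (by
        intro η g1 g2
        have := c_val c hc (Z ψ η) ⟨![2,3,1,0,4], ![3,2,0,1,4], by decide, by decide⟩
          (-1) (by decide) θ₁ η ψ θ₂ (by linarith) (by linarith) (by linarith) (by linarith)
          (by linarith) (by intro j; fin_cases j <;> simp [hZ, ha, hb])
        simp only [this, hK]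
        push_cast
        ring)
    have k2 := piece_int (fun η : ℝ => Complex.exp (η * Complex.I) * ((c (Z ψ η) : ℝ) : ℂ))
      0 (K * (1)) (ψ) (θ₂) (by linarith) (by
        intro η g1 g2
        have := c_val c hc (Z ψ η) ⟨![2,3,0,1,4], ![2,3,0,1,4], by decide, by decide⟩
          (1) (by decide) θ₁ ψ η θ₂ (by linarith) (by linarith) (by linarith) (by linarith)
          (by linarith) (by intro j; fin_cases j <;> simp [hZ, ha, hb])
        simp only [this, hK]
        push_cast
        ring)
    have k3 := piece_int (fun η : ℝ => Complex.exp (η * Complex.I) * ((c (Z ψ η) : ℝ) : ℂ))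
      0 (K * (-1)) (θ₂) (2 * π) (by linarith) (by
        intro η g1 g2
        have := c_val c hc (Z ψ η) ⟨![2,3,0,4,1], ![2,4,0,1,3], by decide, by decide⟩
          (-1) (by decide) θ₁ ψ θ₂ η (by linarith) (by linarith) (by linarith) (by linarith)
          (by linarith) (by intro j; fin_cases j <;> simp [hZ, ha, hb])
        simp only [this, hK]
        push_cast
        ring)
    have i1 := intervalIntegral.integral_add_adjacent_intervals k0.1 k1.1
    have i2 := intervalIntegral.integral_add_adjacent_intervals (k0.1.trans k1.1) k2.1
    have i3 := intervalIntegral.integral_add_adjacent_intervals ((k0.1.trans k1.1).trans k2.1) k3.1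
    simp only [hG]
    rw [← i3, ← i2, ← i1, k0.2, k1.2, k2.2, k3.2, e0, e2, ← ha, ← hb]
    ring
  have gC : ∀ ψ : ℝ, θ₂ < ψ → ψ < 2 * π → G ψ = (-Complex.I * K * (-2*a+2*b+2)) + (2 * Complex.I * K) * Complex.exp (ψ * Complex.I) := by
    intro ψ hl hr
    have k0 := piece_int (fun η : ℝ => Complex.exp (η * Complex.I) * ((c (Z ψ η) : ℝ) : ℂ))
      0 (K * (-1)) (0) (θ₁) (by linarith) (by
        intro η g1 g2
        have := c_val c hc (Z ψ η) ⟨![2,1,3,4,0], ![4,1,0,2,3], by decide, by decide⟩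
          (-1) (by decide) η θ₁ θ₂ ψ (by linarith) (by linarith) (by linarith) (by linarith)
          (by linarith) (by intro j; fin_cases j <;> simp [hZ, ha, hb])
        simp only [this, hK]
        push_cast
        ring)
    have k1 := piece_int (fun η : ℝ => Complex.exp (η * Complex.I) * ((c (Z ψ η) : ℝ) : ℂ))
      0 (K * (1)) (θ₁) (θ₂) (by linarith) (by
        intro η g1 g2
        have := c_val c hc (Z ψ η) ⟨![2,3,1,4,0], ![4,2,0,1,3], by decide, by decide⟩
          (1) (by decide) θ₁ η θ₂ ψ (by linarith) (by linarith) (by linarith) (by linarith)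
          (by linarith) (by intro j; fin_cases j <;> simp [hZ, ha, hb])
        simp only [this, hK]
        push_cast
        ring)
    have k2 := piece_int (fun η : ℝ => Complex.exp (η * Complex.I) * ((c (Z ψ η) : ℝ) : ℂ))
      0 (K * (-1)) (θ₂) (ψ) (by linarith) (by
        intro η g1 g2
        have := c_val c hc (Z ψ η) ⟨![2,3,4,1,0], ![4,3,0,1,2], by decide, by decide⟩
          (-1) (by decide) θ₁ θ₂ η ψ (by linarith) (by linarith) (by linarith) (by linarith)
          (by linarith) (by intro j; fin_cases j <;> simp [hZ, ha, hb])
        simp only [this, hK]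
        push_cast
        ring)
    have k3 := piece_int (fun η : ℝ => Complex.exp (η * Complex.I) * ((c (Z ψ η) : ℝ) : ℂ))
      0 (K * (1)) (ψ) (2 * π) (by linarith) (by
        intro η g1 g2
        have := c_val c hc (Z ψ η) ⟨![2,3,4,0,1], ![3,4,0,1,2], by decide, by decide⟩
          (1) (by decide) θ₁ θ₂ ψ η (by linarith) (by linarith) (by linarith) (by linarith)
          (by linarith) (by intro j; fin_cases j <;> simp [hZ, ha, hb])
        simp only [this, hK]
        push_cast
        ring)
    have i1 := intervalIntegral.integral_add_adjacent_intervals k0.1 k1.1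
    have i2 := intervalIntegral.integral_add_adjacent_intervals (k0.1.trans k1.1) k2.1
    have i3 := intervalIntegral.integral_add_adjacent_intervals ((k0.1.trans k1.1).trans k2.1) k3.1
    simp only [hG]
    rw [← i3, ← i2, ← i1, k0.2, k1.2, k2.2, k3.2, e0, e2, ← ha, ← hb]
    ring
  have m0 := piece_int G _ _ 0 θ₁ h1.le gA
  have m1 := piece_int G _ _ θ₁ θ₂ h12.le gB
  have m2 := piece_int G _ _ θ₂ (2 * π) h2.le gC
  have i1 := intervalIntegral.integral_add_adjacent_intervals m0.1 m1.1
  have i2 := intervalIntegral.integral_add_adjacent_intervals (m0.1.trans m1.1) m2.1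
  rw [← i2, ← i1, m0.2, m1.2, m2.2, e0, e2, ← ha, ← hb, hK]
  have hp : (π : ℂ) ≠ 0 := by exact_mod_cast Real.pi_ne_zero
  push_cast
  field_simp
  ring
end

section
/- Let θ ∈ (0, 2π). Then the iterated average (1/2π)³·∫₀^{2π}∫₀^{2π}∫₀^{2π} e^{i(η−φ)}·c(e^{iη}, e^{iφ}, e^{iψ}, 1, e^{iθ}) dη dφ dψ equals −i·(ζ(2)/(2π²))·(2·sin(θ) + θ − π). -/
open Real Complex

def HInt (f : ℝ → ℂ) (a b : ℝ) (v : ℂ) : Prop :=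
  IntervalIntegrable f MeasureTheory.volume a b ∧ ∫ x in a..b, f x = v

lemma HInt.add {f : ℝ → ℂ} {a b c : ℝ} {v w : ℂ} (h : HInt f a b v) (h' : HInt f b c w) :
    HInt f a c (v + w) :=
  ⟨h.1.trans h'.1, by
    rw [← intervalIntegral.integral_add_adjacent_intervals h.1 h'.1, h.2, h'.2]⟩

lemma HInt.piece {f : ℝ → ℂ} (G g : ℝ → ℂ) {a b : ℝ} (hab : a ≤ b)
    (hG : ∀ x, HasDerivAt G (g x) x) (hg : Continuous g)
    (hf : ∀ x, a < x → x < b → f x = g x) : HInt f a b (G b - G a) := by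
  have he : Set.EqOn g f (Set.uIoo a b) := by
    rw [Set.uIoo_of_le hab]
    intro x hx
    exact (hf x hx.1 hx.2).symm
  have hi := hg.intervalIntegrable (μ := MeasureTheory.volume) a b
  refine ⟨hi.congr_uIoo he, ?_⟩
  rw [← intervalIntegral.integral_congr_uIoo he]
  exact intervalIntegral.integral_eq_sub_of_hasDerivAt (fun x _ => hG x) hi

lemma exp_two_pi_I : Complex.exp ((2 * π : ℝ) * Complex.I) = 1 := by
  push_cast
  exact Complex.exp_two_pi_mul_I

/-- inner integral -/
lemma inner_int (φ k p q r : ℝ) (F : ℝ → ℝ) (h0 : 0 < p) (h1 : p < q) (h2 : q < r)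
    (h3 : r < 2 * π)
    (f1 : ∀ x, 0 < x → x < p → F x = k) (f2 : ∀ x, p < x → x < q → F x = -k)
    (f3 : ∀ x, q < x → x < r → F x = k) (f4 : ∀ x, r < x → x < 2 * π → F x = -k) :
    ∫ η in (0:ℝ)..(2 * π), Complex.exp ((η - φ) * Complex.I) * ((F η : ℝ) : ℂ)
      = -Complex.I * k * Complex.exp (-φ * Complex.I) *
        (2 * Complex.exp (p * Complex.I) - 2 * Complex.exp (q * Complex.I)
          + 2 * Complex.exp (r * Complex.I) - 2) := by
  have key : ∀ (u v : ℝ) (m : ℝ), u ≤ v → (∀ x, u < x → x < v → F x = m) →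
      HInt (fun η : ℝ => Complex.exp ((η - φ) * Complex.I) * ((F η : ℝ) : ℂ)) u v
        ((fun x : ℝ => -Complex.I * m * Complex.exp (-φ * Complex.I)
            * Complex.exp (x * Complex.I)) v
          - (fun x : ℝ => -Complex.I * m * Complex.exp (-φ * Complex.I)
            * Complex.exp (x * Complex.I)) u) := by
    intro u v m huv h
    refine HInt.piece (fun x : ℝ => -Complex.I * m * Complex.exp (-φ * Complex.I)
            * Complex.exp (x * Complex.I)) (fun x : ℝ => m * Complex.exp (-φ * Complex.I)
            * Complex.exp (x * Complex.I)) huv ?_ (by fun_prop) ?_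
    · intro x
      have h1 : HasDerivAt (fun x : ℝ => (x : ℂ) * Complex.I) (1 * Complex.I) x :=
        (Complex.ofRealCLM.hasDerivAt (x := x)).mul_const _
      have := (h1.cexp).const_mul (-Complex.I * m * Complex.exp (-φ * Complex.I))
      refine this.congr_deriv ?_
      linear_combination (-m * Complex.exp (-φ * Complex.I)
            * Complex.exp (x * Complex.I)) * Complex.I_mul_I
    · intro x hx hx'
      rw [h x hx hx', mul_assoc, ← Complex.exp_add, mul_comm]
      congr 2
      ring
  have := (((key 0 p k h0.le f1).add (key p q (-k) h1.le f2)).add (key q r k h2.le f3)).add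
    (key r (2 * π) (-k) h3.le f4)
  rw [this.2]
  simp only [exp_two_pi_I]
  simp only [Complex.ofReal_zero, zero_mul, Complex.exp_zero, Complex.ofReal_neg]
  ring

/-- middle integral -/
lemma middle_int (k a b : ℝ) (F : ℝ → ℝ → ℝ) (h0 : 0 < a) (h1 : a < b) (h2 : b < 2 * π)
    (hF : ∀ η φ, 0 < η → η < 2 * π → 0 < φ → φ < 2 * π → η ≠ φ → η ≠ a → η ≠ b →
      φ ≠ a → φ ≠ b → F η φ = k * Real.sign (φ - η) * Real.sign (a - η) * Real.sign (b - η)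
        * Real.sign (a - φ) * Real.sign (b - φ)) :
    ∫ φ in (0:ℝ)..(2 * π), ∫ η in (0:ℝ)..(2 * π),
        Complex.exp ((η - φ) * Complex.I) * ((F η φ : ℝ) : ℂ)
      = -2 * Complex.I * ((k * (2 * π + 4 * (Real.sin b - Real.sin a) - 4 * Real.sin (b - a)) : ℝ) : ℂ)
       := by
  have key : ∀ (u v : ℝ) (α β : ℂ), u ≤ v → (∀ φ : ℝ, u < φ → φ < v →
      ∫ η in (0:ℝ)..(2 * π), Complex.exp ((η - φ) * Complex.I) * ((F η φ : ℝ) : ℂ)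
        = α + β * Complex.exp (-φ * Complex.I)) →
      HInt (fun φ : ℝ => ∫ η in (0:ℝ)..(2 * π),
        Complex.exp ((η - φ) * Complex.I) * ((F η φ : ℝ) : ℂ)) u v
        ((fun x : ℝ => α * x + β * Complex.I * Complex.exp (-x * Complex.I)) v
          - (fun x : ℝ => α * x + β * Complex.I * Complex.exp (-x * Complex.I)) u) := by
    intro u v α β huv h
    refine HInt.piece
      (fun x : ℝ => α * x + β * Complex.I * Complex.exp (-x * Complex.I)) (fun x : ℝ => α + β * Complex.exp (-x * Complex.I)) huv ?_
      (by fun_prop) h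
    intro x
    have h0 : HasDerivAt (fun x : ℝ => (x : ℂ)) 1 x := Complex.ofRealCLM.hasDerivAt (x := x)
    have h1 : HasDerivAt (fun x : ℝ => -(x : ℂ) * Complex.I) (-1 * Complex.I) x :=
      h0.neg.mul_const _
    have := (h0.const_mul α).add ((h1.cexp).const_mul (β * Complex.I))
    refine this.congr_deriv ?_
    linear_combination (-β * Complex.exp (-x * Complex.I)) * Complex.I_mul_I
  have sp : ∀ x y : ℝ, x < y → Real.sign (y - x) = 1 := fun x y h =>
    Real.sign_of_pos (by linarith)
  have sn : ∀ x y : ℝ, x < y → Real.sign (x - y) = -1 := fun x y h =>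
    Real.sign_of_neg (by linarith)
  have ee : ∀ φ : ℝ, Complex.exp (-φ * Complex.I) * Complex.exp (φ * Complex.I) = 1 := by
    intro φ
    rw [← Complex.exp_add]
    simp
  have A1 := key 0 a (-Complex.I * k * 2) (-Complex.I * k * (2 * Complex.exp (b * Complex.I)
      - 2 * Complex.exp (a * Complex.I) - 2)) h0.le (by
    intro φ hφ hφ'
    rw [inner_int φ k φ a b (fun η => F η φ) hφ hφ' h1 h2]
    · linear_combination (-Complex.I * k * 2) * ee φ
    all_goals
      intro x hx hx'
      rw [hF x φ (by linarith) (by linarith) (by linarith) (by linarith) (by intro h; linarith)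
        (by intro h; linarith) (by intro h; linarith) (by intro h; linarith)
        (by intro h; linarith), sp φ a (by linarith), sp φ b (by linarith)]
    · rw [sp x φ (by linarith), sp x a (by linarith), sp x b (by linarith)]; ring
    · rw [sn φ x (by linarith), sp x a (by linarith), sp x b (by linarith)]; ring
    · rw [sn φ x (by linarith), sn a x (by linarith), sp x b (by linarith)]; ring
    · rw [sn φ x (by linarith), sn a x (by linarith), sn b x (by linarith)]; ring)
  have A2 := key a b (-Complex.I * k * 2) (Complex.I * k * (2 * Complex.exp (b * Complex.I)
      + 2 * Complex.exp (a * Complex.I) - 2)) h1.le (by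
    intro φ hφ hφ'
    rw [inner_int φ (-k) a φ b (fun η => F η φ) h0 hφ hφ' h2]
    · push_cast
      linear_combination (-Complex.I * k * 2) * ee φ
    all_goals
      intro x hx hx'
      rw [hF x φ (by linarith) (by linarith) (by linarith) (by linarith) (by intro h; linarith)
        (by intro h; linarith) (by intro h; linarith) (by intro h; linarith)
        (by intro h; linarith), sn a φ (by linarith), sp φ b (by linarith)]
    · rw [sp x φ (by linarith), sp x a (by linarith), sp x b (by linarith)]; ring
    · rw [sp x φ (by linarith), sn a x (by linarith), sp x b (by linarith)]; ring
    · rw [sn φ x (by linarith), sn a x (by linarith), sp x b (by linarith)]; ring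
    · rw [sn φ x (by linarith), sn a x (by linarith), sn b x (by linarith)]; ring)
  have A3 := key b (2 * π) (-Complex.I * k * 2) (-Complex.I * k * (2 * Complex.exp (a * Complex.I)
      - 2 * Complex.exp (b * Complex.I) - 2)) h2.le (by
    intro φ hφ hφ'
    rw [inner_int φ k a b φ (fun η => F η φ) h0 h1 hφ hφ']
    · linear_combination (-Complex.I * k * 2) * ee φ
    all_goals
      intro x hx hx'
      rw [hF x φ (by linarith) (by linarith) (by linarith) (by linarith) (by intro h; linarith)
        (by intro h; linarith) (by intro h; linarith) (by intro h; linarith)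
        (by intro h; linarith), sn a φ (by linarith), sn b φ (by linarith)]
    · rw [sp x φ (by linarith), sp x a (by linarith), sp x b (by linarith)]; ring
    · rw [sp x φ (by linarith), sn a x (by linarith), sp x b (by linarith)]; ring
    · rw [sp x φ (by linarith), sn a x (by linarith), sn b x (by linarith)]; ring
    · rw [sn φ x (by linarith), sn a x (by linarith), sn b x (by linarith)]; ring)
  rw [((A1.add A2).add A3).2]
  have e2 : Complex.exp (-((2 * π : ℝ) : ℂ) * Complex.I) = 1 := by
    have := ee (2 * π)
    rwa [exp_two_pi_I, mul_one] at this
  have ea := ee a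
  have eb := ee b
  simp only [e2]
  push_cast
  rw [Complex.sin_sub]
  simp only [Complex.sin, Complex.cos]
  simp only [neg_zero, zero_mul, Complex.exp_zero]
  generalize Complex.exp (-(a:ℂ) * Complex.I) = A' at *
  generalize Complex.exp ((a:ℂ) * Complex.I) = A at *
  generalize Complex.exp (-(b:ℂ) * Complex.I) = B' at *
  generalize Complex.exp ((b:ℂ) * Complex.I) = B at *
  have hI := Complex.I_mul_I
  ring_nf

lemma c_val_s17 (c : (Fin 5 → ℂ) → ℝ) (hc : OrientationProp c) (η φ ψ θ : ℝ)
    (hη : 0 < η) (hη' : η < 2 * π) (hφ : 0 < φ) (hφ' : φ < 2 * π)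
    (hψ : 0 < ψ) (hψ' : ψ < 2 * π) (hθ : 0 < θ) (hθ' : θ < 2 * π)
    (n1 : η ≠ φ) (n2 : η ≠ ψ) (n3 : η ≠ θ) (n4 : φ ≠ ψ) (n5 : φ ≠ θ) (n6 : ψ ≠ θ) :
    c ![Complex.exp (η * Complex.I), Complex.exp (φ * Complex.I),
        Complex.exp (ψ * Complex.I), 1, Complex.exp (θ * Complex.I)] =
      π ^ 2 / 12 * (Real.sign (φ - η) * Real.sign (ψ - η) * Real.sign (θ - η)
        * Real.sign (ψ - φ) * Real.sign (θ - φ) * Real.sign (θ - ψ)) := by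
  set x : Fin 5 → ℝ := ![η, φ, ψ, 0, θ] with hx
  have hxr : ∀ i, 0 ≤ x i ∧ x i < 2 * π := by
    intro i
    fin_cases i <;> simp [hx, Real.pi_pos] <;> constructor <;> linarith
  have hinj : Function.Injective x := by
    intro i j hij
    fin_cases i <;> fin_cases j <;> simp [hx] at hij ⊢ <;>
      first | exact absurd hij ‹_› | exact absurd hij.symm ‹_› | linarith
  set σ := Tuple.sort x with hσ
  have hm : StrictMono (x ∘ σ) :=
    (Tuple.monotone_sort x).strictMono_of_injective (hinj.comp σ.injective)
  have hz : ![Complex.exp (η * Complex.I), Complex.exp (φ * Complex.I),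
        Complex.exp (ψ * Complex.I), 1, Complex.exp (θ * Complex.I)]
      = fun i => Complex.exp (x i * Complex.I) := by
    funext i
    fin_cases i <;> simp [hx]
  rw [hz, hc _ σ ⟨x ∘ σ, hm, fun i j => by
    have := hxr (σ i); have := hxr (σ j); simp only [Function.comp]; linarith, fun j => rfl⟩]
  have hs := σ.prod_Ioi_comp_eq_sign_mul_prod (f := fun i j => Real.sign (x j - x i))
    (fun i j => by rw [← Real.sign_neg]; congr 1; ring)
  have hone : ∏ i, ∏ j ∈ Finset.Ioi i, Real.sign (x (σ j) - x (σ i)) = 1 := by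
    refine Finset.prod_eq_one fun i _ => Finset.prod_eq_one fun j hj => ?_
    have := hm (Finset.mem_Ioi.1 hj)
    simp only [Function.comp] at this
    exact Real.sign_of_pos (by linarith)
  rw [hone] at hs
  have i0 : Finset.Ioi (0 : Fin 5) = {1, 2, 3, 4} := by decide
  have i1 : Finset.Ioi (1 : Fin 5) = {2, 3, 4} := by decide
  have i2 : Finset.Ioi (2 : Fin 5) = {3, 4} := by decide
  have i3 : Finset.Ioi (3 : Fin 5) = {4} := by decide
  have i4 : Finset.Ioi (4 : Fin 5) = ∅ := by decide
  have hP : ∏ i, ∏ j ∈ Finset.Ioi i, Real.sign (x j - x i) =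
      -(Real.sign (φ - η) * Real.sign (ψ - η) * Real.sign (θ - η)
        * Real.sign (ψ - φ) * Real.sign (θ - φ) * Real.sign (θ - ψ)) := by
    rw [Fin.prod_univ_five, i0, i1, i2, i3, i4]
    have x0 : x 0 = η := rfl
    have x1 : x 1 = φ := rfl
    have x2 : x 2 = ψ := rfl
    have x3 : x 3 = 0 := rfl
    have x4 : x 4 = θ := rfl
    have s1 := Real.sign_of_pos hη
    have s2 := Real.sign_of_pos hφ
    have s3 := Real.sign_of_pos hψ
    have s4 := Real.sign_of_pos hθ
    simp only [Finset.prod_insert, Finset.prod_singleton, Finset.prod_empty, x0, x1, x2, x3, x4,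
      zero_sub, sub_zero, Real.sign_neg, s1, s2, s3, s4]
    simp [x0, x1, x2, x3, x4, Real.sign_neg, s1, s2, s3, s4, -mul_eq_mul_left_iff,
      -mul_eq_mul_right_iff]
    ring
  rw [hP] at hs
  rcases Int.units_eq_one_or (Equiv.Perm.sign σ) with h | h <;> rw [h] at hs ⊢ <;>
    push_cast at hs ⊢
  · linear_combination (-(π ^ 2 / 12)) * hs
  · linear_combination (π ^ 2 / 12) * hs

/-- **Basic integral I₃.** For `θ ∈ (0, 2π)`,
`⨍⨍⨍ e^{i(η-φ)}·c(e^{iη}, e^{iφ}, e^{iψ}, 1, e^{iθ}) dη dφ dψ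
= -i·(ζ(2)/(2π²))·(2·sin θ + θ - π)`. -/
theorem basic_integral_I3 (c : (Fin 5 → ℂ) → ℝ) (hc : OrientationProp c)
    (θ : ℝ) (hθ : θ ∈ Set.Ioo (0:ℝ) (2 * π)) :
    (((1 / (2 * π)) ^ 3 : ℝ) : ℂ) *
        ∫ ψ in (0:ℝ)..(2 * π), ∫ φ in (0:ℝ)..(2 * π), ∫ η in (0:ℝ)..(2 * π),
          Complex.exp ((η - φ) * Complex.I) *
            ((c ![Complex.exp (η * Complex.I), Complex.exp (φ * Complex.I),
                Complex.exp (ψ * Complex.I), 1, Complex.exp (θ * Complex.I)] : ℝ) : ℂ)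
      = -Complex.I * (((π ^ 2 / 6) / (2 * π ^ 2) : ℝ) : ℂ) *
          ((2 * Real.sin θ + θ - π : ℝ) : ℂ) := by
  obtain ⟨hθ0, hθ2⟩ := hθ
  have sp : ∀ x y : ℝ, x < y → Real.sign (y - x) = 1 := fun x y h =>
    Real.sign_of_pos (by linarith)
  have sn : ∀ x y : ℝ, x < y → Real.sign (x - y) = -1 := fun x y h =>
    Real.sign_of_neg (by linarith)
  have P1 := HInt.piece (f := fun ψ : ℝ => ∫ φ in (0:ℝ)..(2 * π), ∫ η in (0:ℝ)..(2 * π),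
          Complex.exp ((η - φ) * Complex.I) *
            ((c ![Complex.exp (η * Complex.I), Complex.exp (φ * Complex.I),
                Complex.exp (ψ * Complex.I), 1, Complex.exp (θ * Complex.I)] : ℝ) : ℂ))
    (fun ψ : ℝ => -2 * Complex.I * ((π ^ 2 / 12 * ((2 * π + 4 * Real.sin θ) * ψ
      + 4 * Real.cos ψ - 4 * Real.cos (θ - ψ)) : ℝ) : ℂ))
    (fun ψ : ℝ => -2 * Complex.I * ((π ^ 2 / 12 *
      (2 * π + 4 * (Real.sin θ - Real.sin ψ) - 4 * Real.sin (θ - ψ)) : ℝ) : ℂ))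
    hθ0.le (by
      intro x
      refine HasDerivAt.const_mul _ (HasDerivAt.ofReal_comp (HasDerivAt.const_mul _ ?_))
      have h1 := ((hasDerivAt_id x).const_mul (2 * π + 4 * Real.sin θ)).add
        ((Real.hasDerivAt_cos x).const_mul 4)
      have h2 := (((hasDerivAt_id x).const_sub θ).cos).const_mul 4
      refine (h1.sub h2).congr_deriv ?_
      simp only [id]
      ring) (by fun_prop) (by
      intro ψ h h'
      refine middle_int (π ^ 2 / 12) ψ θ (fun η φ => c ![Complex.exp (η * Complex.I),
        Complex.exp (φ * Complex.I), Complex.exp (ψ * Complex.I), 1,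
        Complex.exp (θ * Complex.I)]) h h' hθ2 ?_
      intro η φ a1 a2 a3 a4 a5 a6 a7 a8 a9
      rw [c_val_s17 c hc η φ ψ θ a1 a2 a3 a4 h (by linarith) hθ0 hθ2 a5 a6 a7 a8 a9 h'.ne,
        sp ψ θ h']
      ring)
  have P2 := HInt.piece (f := fun ψ : ℝ => ∫ φ in (0:ℝ)..(2 * π), ∫ η in (0:ℝ)..(2 * π),
          Complex.exp ((η - φ) * Complex.I) *
            ((c ![Complex.exp (η * Complex.I), Complex.exp (φ * Complex.I),
                Complex.exp (ψ * Complex.I), 1, Complex.exp (θ * Complex.I)] : ℝ) : ℂ))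
    (fun ψ : ℝ => -2 * Complex.I * ((-(π ^ 2 / 12) * ((2 * π - 4 * Real.sin θ) * ψ
      - 4 * Real.cos ψ + 4 * Real.cos (ψ - θ)) : ℝ) : ℂ))
    (fun ψ : ℝ => -2 * Complex.I * ((-(π ^ 2 / 12) *
      (2 * π + 4 * (Real.sin ψ - Real.sin θ) - 4 * Real.sin (ψ - θ)) : ℝ) : ℂ))
    hθ2.le (by
      intro x
      refine HasDerivAt.const_mul _ (HasDerivAt.ofReal_comp (HasDerivAt.const_mul _ ?_))
      have h1 := ((hasDerivAt_id x).const_mul (2 * π - 4 * Real.sin θ)).sub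
        ((Real.hasDerivAt_cos x).const_mul 4)
      have h2 := (((hasDerivAt_id x).sub_const θ).cos).const_mul 4
      refine (h1.add h2).congr_deriv ?_
      simp only [id]
      ring) (by fun_prop) (by
      intro ψ h h'
      refine middle_int (-(π ^ 2 / 12)) θ ψ (fun η φ => c ![Complex.exp (η * Complex.I),
        Complex.exp (φ * Complex.I), Complex.exp (ψ * Complex.I), 1,
        Complex.exp (θ * Complex.I)]) hθ0 h h' ?_
      intro η φ a1 a2 a3 a4 a5 a6 a7 a8 a9
      rw [c_val_s17 c hc η φ ψ θ a1 a2 a3 a4 (by linarith) h' hθ0 hθ2 a5 a7 a6 a9 a8 h.ne',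
        sn θ ψ h]
      ring)
  rw [(P1.add P2).2]
  have hπ : (π : ℂ) ≠ 0 := by exact_mod_cast Real.pi_ne_zero
  simp only [sub_self, sub_zero, Real.cos_zero, Real.cos_two_pi, Real.cos_two_pi_sub]
  push_cast
  field_simp
  ring
end
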